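/- Let q = p^f be a power of a prime p, let n ≥ 2 and suppose GL_n(q) is not solvable. Let π be a set of primes with 2 ∈ π, 3 ∉ π and p ∉ π, and let H be a solvable Hall π-subgroup of GL_n(q). Set G = H·SL_n(q). Then there exist x, y, z ∈ G such that H ∩ H^x ∩ H^y ∩ H^z is contained in the center Z(GL_n(q)), i.e. consists of scalar matrices. -/

import Mathlib

open Matrix Pointwise

/-- `H^x = x⁻¹ H x`. -/
def conjBy {G : Type*} [Group G] (H : Subgroup G) (x : G) : Subgroup G :=
  Subgroup.map ((MulAut.conj x⁻¹).toMonoidHom) H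

/-- Hall π-subgroup of the whole group. -/
def IsHallSubgroup {G : Type*} [Group G] (π : Set ℕ) (H : Subgroup G) : Prop :=
  (∀ r : ℕ, r.Prime → r ∣ Nat.card H → r ∈ π) ∧ ∀ r ∈ π, ¬ r ∣ H.index

/-- Hall π-subgroup of the subgroup `K`. -/
def IsHallSubgroupIn {G : Type*} [Group G] (π : Set ℕ) (K H : Subgroup G) : Prop :=
  H ≤ K ∧ (∀ r : ℕ, r.Prime → r ∣ Nat.card H → r ∈ π) ∧ ∀ r ∈ π, ¬ r ∣ H.relIndex K

/-- The subgroup `SL_n` of `GL_n`. -/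
def SLsub (n : ℕ) (F : Type*) [Field F] : Subgroup (GL (Fin n) F) where
  carrier := {g | Matrix.det (g : Matrix (Fin n) (Fin n) F) = 1}
  one_mem' := by simp
  mul_mem' := by
    intro a b ha hb
    simp only [Set.mem_setOf_eq, Units.val_mul, Matrix.det_mul] at *
    rw [ha, hb, one_mul]
  inv_mem' := by
    intro g hg
    simp only [Set.mem_setOf_eq] at *
    have h1 : ((g⁻¹ : GL (Fin n) F) : Matrix (Fin n) (Fin n) F) *
        (g : Matrix (Fin n) (Fin n) F) = 1 := g.inv_mul
    have := congrArg Matrix.det h1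
    rw [Matrix.det_mul, Matrix.det_one, hg, mul_one] at this
    exact this

/-- The group of similitudes of the bilinear form `B` (acting on row vectors). -/
def similitudeGroup {n : ℕ} {F : Type*} [Field F]
    (B : (Fin n → F) → (Fin n → F) → F) : Subgroup (GL (Fin n) F) where
  carrier := {g | ∃ c : Fˣ, ∀ u v : Fin n → F,
    B (Matrix.vecMul u (g : Matrix (Fin n) (Fin n) F))
      (Matrix.vecMul v (g : Matrix (Fin n) (Fin n) F)) = (c : F) * B u v}
  one_mem' := ⟨1, by simp⟩
  mul_mem' := by
    rintro a b ⟨c, hc⟩ ⟨d, hd⟩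
    refine ⟨c * d, fun u v => ?_⟩
    simp only [Units.val_mul, ← Matrix.vecMul_vecMul, hd, hc]
    ring
  inv_mem' := by
    rintro g ⟨c, hc⟩
    refine ⟨c⁻¹, fun u v => ?_⟩
    have h1 : ∀ w : Fin n → F, Matrix.vecMul
        (Matrix.vecMul w ((g⁻¹ : GL (Fin n) F) : Matrix (Fin n) (Fin n) F))
        (g : Matrix (Fin n) (Fin n) F) = w := by
      intro w
      rw [Matrix.vecMul_vecMul, g.inv_mul, Matrix.vecMul_one]
    have h2 := hc (Matrix.vecMul u ((g⁻¹ : GL (Fin n) F) : Matrix (Fin n) (Fin n) F))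
      (Matrix.vecMul v ((g⁻¹ : GL (Fin n) F) : Matrix (Fin n) (Fin n) F))
    rw [h1, h1] at h2
    rw [h2, Units.val_inv_eq_inv_val, inv_mul_cancel_left₀ (by exact_mod_cast c.ne_zero)]

/-- The isometry group of the bilinear form `B` (acting on row vectors). -/
def isometryGroup {n : ℕ} {F : Type*} [Field F]
    (B : (Fin n → F) → (Fin n → F) → F) : Subgroup (GL (Fin n) F) where
  carrier := {g | ∀ u v : Fin n → F,
    B (Matrix.vecMul u (g : Matrix (Fin n) (Fin n) F))
      (Matrix.vecMul v (g : Matrix (Fin n) (Fin n) F)) = B u v}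
  one_mem' := by simp
  mul_mem' := by
    intro a b ha hb u v
    simp only [Set.mem_setOf_eq] at ha hb
    simp only [Units.val_mul, ← Matrix.vecMul_vecMul]
    rw [hb, ha]
  inv_mem' := by
    intro g hg u v
    have h1 : ∀ w : Fin n → F, Matrix.vecMul
        (Matrix.vecMul w ((g⁻¹ : GL (Fin n) F) : Matrix (Fin n) (Fin n) F))
        (g : Matrix (Fin n) (Fin n) F) = w := by
      intro w
      rw [Matrix.vecMul_vecMul, g.inv_mul, Matrix.vecMul_one]
    have h2 := hg (Matrix.vecMul u ((g⁻¹ : GL (Fin n) F) : Matrix (Fin n) (Fin n) F))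
      (Matrix.vecMul v ((g⁻¹ : GL (Fin n) F) : Matrix (Fin n) (Fin n) F))
    rw [h1, h1] at h2
    exact h2.symm

/-- The group of similitudes of the quadratic form `Q` (acting on row vectors). -/
def qSimilitudeGroup {n : ℕ} {F : Type*} [Field F]
    (Q : (Fin n → F) → F) : Subgroup (GL (Fin n) F) where
  carrier := {g | ∃ c : Fˣ, ∀ v : Fin n → F,
    Q (Matrix.vecMul v (g : Matrix (Fin n) (Fin n) F)) = (c : F) * Q v}
  one_mem' := ⟨1, by simp⟩
  mul_mem' := by
    rintro a b ⟨c, hc⟩ ⟨d, hd⟩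
    refine ⟨c * d, fun v => ?_⟩
    simp only [Units.val_mul, ← Matrix.vecMul_vecMul, hd, hc]
    ring
  inv_mem' := by
    rintro g ⟨c, hc⟩
    refine ⟨c⁻¹, fun v => ?_⟩
    have h1 : ∀ w : Fin n → F, Matrix.vecMul
        (Matrix.vecMul w ((g⁻¹ : GL (Fin n) F) : Matrix (Fin n) (Fin n) F))
        (g : Matrix (Fin n) (Fin n) F) = w := by
      intro w
      rw [Matrix.vecMul_vecMul, g.inv_mul, Matrix.vecMul_one]
    have h2 := hc (Matrix.vecMul v ((g⁻¹ : GL (Fin n) F) : Matrix (Fin n) (Fin n) F))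
    rw [h1] at h2
    rw [h2, Units.val_inv_eq_inv_val, inv_mul_cancel_left₀ (by exact_mod_cast c.ne_zero)]

/-- The unitary group `GU_n` with respect to the field automorphism `φ`. -/
def GUgrp (n : ℕ) {K : Type*} [Field K] (φ : K →+* K) : Subgroup (GL (Fin n) K) where
  carrier := {g | ((g : Matrix (Fin n) (Fin n) K).map φ)ᵀ * (g : Matrix (Fin n) (Fin n) K) = 1}
  one_mem' := by
    simp [Matrix.map_one φ φ.map_zero φ.map_one]
  mul_mem' := by
    intro a b ha hb
    simp only [Set.mem_setOf_eq, Units.val_mul, Matrix.map_mul, Matrix.transpose_mul] at *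
    calc ((b : Matrix (Fin n) (Fin n) K).map φ)ᵀ * ((a : Matrix (Fin n) (Fin n) K).map φ)ᵀ *
          ((a : Matrix (Fin n) (Fin n) K) * (b : Matrix (Fin n) (Fin n) K))
        = ((b : Matrix (Fin n) (Fin n) K).map φ)ᵀ *
          (((a : Matrix (Fin n) (Fin n) K).map φ)ᵀ * (a : Matrix (Fin n) (Fin n) K)) *
          (b : Matrix (Fin n) (Fin n) K) := by noncomm_ring
      _ = 1 := by rw [ha, mul_one, hb]
  inv_mem' := by
    intro g hg
    simp only [Set.mem_setOf_eq] at *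
    have hcomm : (g : Matrix (Fin n) (Fin n) K) * ((g : Matrix (Fin n) (Fin n) K).map φ)ᵀ = 1 :=
      mul_eq_one_comm.mp hg
    have h1 : ((g : Matrix (Fin n) (Fin n) K) * ((g⁻¹ : GL (Fin n) K) : Matrix (Fin n) (Fin n) K)).map φ = 1 := by
      rw [g.mul_inv]
      exact Matrix.map_one φ φ.map_zero φ.map_one
    rw [Matrix.map_mul] at h1
    have h2 := congrArg Matrix.transpose h1
    rw [Matrix.transpose_mul, Matrix.transpose_one] at h2
    calc (((g⁻¹ : GL (Fin n) K) : Matrix (Fin n) (Fin n) K).map φ)ᵀ *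
          ((g⁻¹ : GL (Fin n) K) : Matrix (Fin n) (Fin n) K)
        = (((g⁻¹ : GL (Fin n) K) : Matrix (Fin n) (Fin n) K).map φ)ᵀ *
          (((g : Matrix (Fin n) (Fin n) K).map φ)ᵀ * (g : Matrix (Fin n) (Fin n) K)) *
          ((g⁻¹ : GL (Fin n) K) : Matrix (Fin n) (Fin n) K) := by rw [hg, mul_one]
      _ = ((((g⁻¹ : GL (Fin n) K) : Matrix (Fin n) (Fin n) K).map φ)ᵀ *
          ((g : Matrix (Fin n) (Fin n) K).map φ)ᵀ) *
          ((g : Matrix (Fin n) (Fin n) K) * ((g⁻¹ : GL (Fin n) K) : Matrix (Fin n) (Fin n) K)) := by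
            noncomm_ring
      _ = 1 := by rw [h2, g.mul_inv, mul_one]

/-!
The group of diagonal matrices with entries `±1` is a 2-group, so it fixes a coset of the odd-index
subgroup `H`; after conjugation `H` contains it, and in particular the reflections at all
coordinates. Let `W` be the span of three independent reflection vectors, the middle one meeting
both others. The stabilizer of `W` in `H` would act irreducibly on `W`; since its order is prime to
3 and to the characteristic, Clifford theory for the prime dimension 3 yields a nonscalar normal
subgroup whose elements act trivially or without fixed vectors. Such a subgroup commutes with the
reflections, hence is scalar, a contradiction. Consequently the coordinates fall into blocks of size
at most two which `H` permutes.

If there are at least two blocks, embed each into the preceding one: conjugating by the unipotent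
`1 + P` of the resulting shift `P` leaves only block diagonal matrices determined by their entries
on the first block, and two transvections make that block scalar. If there is a single block, then
`n = 2`, and `H` stabilizes a line of traceless matrices. Conjugates of this line by `1`, `u` and
`u⁻¹`, for a suitable transvection `u`, span all traceless matrices, which forces scalars; such a
`u` exists unless `|F| = 3`, and `GL₂(3)` is solvable because it acts on the four points of the
projective line with central kernel.
-/

section ConjBy

variable {G : Type*} [Group G] {H S Z : Subgroup G}

lemma mem_conjBy {x g : G} : g ∈ conjBy H x ↔ x * g * x⁻¹ ∈ H := by
  rw [conjBy, Subgroup.mem_map_equiv, MulAut.conj_symm_apply, inv_inv]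

lemma exists_range_le_conjBy {P : Type*} [Group P] {p : ℕ}
    [Fact p.Prime] (hP : IsPGroup p P) (hH : ¬ p ∣ H.index) (φ : P →* G) :
    ∃ t, φ.range ≤ conjBy H t := by
  let : MulAction P (G ⧸ H) := MulAction.compHom _ φ
  obtain ⟨a, ha⟩ := hP.nonempty_fixed_point_of_prime_not_dvd_card (G ⧸ H) hH
  induction a using QuotientGroup.induction_on with
  | H t =>
    refine ⟨t⁻¹, ?_⟩
    rintro _ ⟨e, rfl⟩
    have hfix : ((φ e * t : G) : G ⧸ H) = t := ha e
    rw [mem_conjBy, inv_inv, mul_assoc]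
    exact QuotientGroup.eq.1 hfix.symm

/-- Some intersection of `H` with three of its conjugates by elements of `S` is central in the
ambient group. -/
def HasCentralIntersection (S H : Subgroup G) : Prop :=
  ∃ x ∈ S, ∃ y ∈ S, ∃ z ∈ S, H ⊓ conjBy H x ⊓ conjBy H y ⊓ conjBy H z ≤ Subgroup.center G

lemma HasCentralIntersection.of_conjBy [hS : S.Normal] {t : G}
    (h : HasCentralIntersection S (conjBy H t)) : HasCentralIntersection S H := by
  obtain ⟨x, hx, y, hy, z, hz, h⟩ := h
  have conj_mem {u g : G} (hg : g ∈ conjBy H (t * u * t⁻¹)) :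
      t⁻¹ * g * t ∈ conjBy (conjBy H t) u := by
    simpa [mem_conjBy, mul_assoc] using hg
  refine ⟨_, hS.conj_mem x hx t, _, hS.conj_mem y hy t, _, hS.conj_mem z hz t, ?_⟩
  rintro g ⟨⟨⟨hg, hgx⟩, hgy⟩, hgz⟩
  have hc : t⁻¹ * g * t ∈ Subgroup.center G :=
    h ⟨⟨⟨mem_conjBy.2 (by simpa [mul_assoc] using hg), conj_mem hgx⟩, conj_mem hgy⟩, conj_mem hgz⟩
  simpa [mul_assoc] using (inferInstance : (Subgroup.center G).Normal).conj_mem _ hc t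

lemma exists_normal_not_le_commutator_le [Group.IsSolvable G] (hZ : Z ≠ ⊤) :
    ∃ N : Subgroup G, N.Normal ∧ ¬ N ≤ Z ∧ ⁅N, N⁆ ≤ Z := by
  classical
  have h : ∃ k, derivedSeries G k ≤ Z :=
    (Group.IsSolvable.solvable (G := G)).imp fun k hk => hk.le.trans bot_le
  obtain ⟨k, hk⟩ : ∃ k, Nat.find h = k + 1 := Nat.exists_eq_succ_of_ne_zero fun h0 =>
    hZ <| top_le_iff.1 <| by simpa only [h0, derivedSeries_zero] using Nat.find_spec h
  refine ⟨derivedSeries G k, inferInstance, Nat.find_min h (hk ▸ k.lt_succ_self), ?_⟩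
  rw [← derivedSeries_succ, ← hk]
  exact Nat.find_spec h

end ConjBy

section Clifford

variable {F G V : Type*} [Field F] [Group G] [AddCommGroup V] [Module F V]
  (ρ : Representation F G V) (N : Subgroup G)

/-- The subgroup of elements of `G` acting on `V` by a scalar. -/
def scalarSubgroup : Subgroup G where
  carrier := {g | ∃ c : F, ρ g = c • 1}
  one_mem' := ⟨1, by rw [map_one, one_smul]⟩
  mul_mem' := by
    rintro g h ⟨c, hc⟩ ⟨d, hd⟩
    exact ⟨c * d, by rw [map_mul, hc, hd, smul_mul_smul_comm, one_mul]⟩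
  inv_mem' := by
    rintro g ⟨c, hc⟩
    have h : c • ρ g⁻¹ = 1 := by
      rw [← one_mul (ρ g⁻¹), ← smul_mul_assoc, ← hc, ← map_mul, mul_inv_cancel, map_one]
    obtain rfl | hc0 := eq_or_ne c 0
    · exact ⟨0, by rw [← mul_one (ρ g⁻¹), ← h, zero_smul, zero_smul, mul_zero]⟩
    · exact ⟨c⁻¹, by rw [← h, inv_smul_smul₀ hc0]⟩

/-- `G` acts on the subspaces of `V` by translating them. -/
abbrev submoduleAction : MulAction G (Submodule F V) := MulAction.compHom _ ρ

/-- The simultaneous eigenspace of `N` for the eigenvalue function `χ`. -/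
def weightSpace (χ : N → F) : Submodule F V := ⨅ x : N, Module.End.eigenspace (ρ x) (χ x)

variable {ρ N}

lemma mem_weightSpace {χ : N → F} {v : V} :
    v ∈ weightSpace ρ N χ ↔ ∀ x : N, ρ x v = χ x • v := by
  simp only [weightSpace, Submodule.mem_iInf, Module.End.mem_eigenspace_iff]

lemma iSupIndep_weightSpace (hN : ∀ x ∈ N, ∀ y ∈ N, Commute (ρ x) (ρ y)) :
    iSupIndep (weightSpace ρ N) :=
  (Module.End.independent_iInf_maxGenEigenspace_of_forall_mapsTo (fun x : N => ρ x) fun x y c =>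
    Module.End.mapsTo_maxGenEigenspace_of_comm (hN y y.2 x x.2) c).mono fun χ =>
    iInf_mono fun x => (Module.End.genEigenspace (ρ x) (χ x)).monotone le_top

lemma map_weightSpace [N.Normal] (g : G) (χ : N → F) :
    (weightSpace ρ N χ).map (ρ g) = weightSpace ρ N (χ ∘ MulAut.conjNormal g⁻¹) := by
  have conj_apply (x : N) (v : V) :
      ρ g (ρ (MulAut.conjNormal g⁻¹ x : N) v) = ρ x (ρ g v) := by
    simp only [← Module.End.mul_apply, ← map_mul, MulAut.conjNormal_apply]
    group
  ext v
  obtain ⟨v, rfl⟩ := (ρ.apply_bijective g).2 v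
  rw [← SetLike.mem_coe, Submodule.map_coe, (ρ.apply_bijective g).1.mem_set_image,
    SetLike.mem_coe, mem_weightSpace, mem_weightSpace,
    (MulAut.conjNormal g⁻¹ : MulAut N).surjective.forall]
  exact forall_congr' fun x => by
    rw [Function.comp_apply, ← conj_apply, ← map_smul, (ρ.apply_bijective g).1.eq_iff]

lemma finrank_map_apply (g : G) (U : Submodule F V) :
    Module.finrank F ↥(U.map (ρ g)) = Module.finrank F U :=
  (Submodule.equivMapOfInjective (ρ g) (ρ.apply_bijective g).1 U).finrank_eq.symm

lemma iSup_orbit_eq_top [ρ.IsIrreducible] {U : Submodule F V} (hU : U ≠ ⊥) :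
    letI := submoduleAction ρ
    ⨆ W : MulAction.orbit G U, (W : Submodule F V) = ⊤ := by
  let _ := submoduleAction ρ
  let σ : Subrepresentation ρ :=
    { toSubmodule := ⨆ W : MulAction.orbit G U, W
      apply_mem_toSubmodule := fun g v hv => by
        have hle : (⨆ W : MulAction.orbit G U, (W : Submodule F V)).map (ρ g) ≤
            ⨆ W : MulAction.orbit G U, (W : Submodule F V) := by
          rw [Submodule.map_iSup]
          exact iSup_le fun W => le_iSup (fun W : MulAction.orbit G U => (W : Submodule F V))
            (g • W)
        exact hle ⟨v, hv, rfl⟩ }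
  have hle : U ≤ σ.toSubmodule :=
    le_iSup (fun W : MulAction.orbit G U => (W : Submodule F V)) ⟨U, MulAction.mem_orbit_self U⟩
  obtain h | h := eq_bot_or_eq_top σ
  · exact absurd (le_bot_iff.1 (hle.trans_eq (congrArg (·.toSubmodule) h))) hU
  · exact congrArg (·.toSubmodule) h

lemma finrank_eq_card_orbit_mul [Finite G] [FiniteDimensional F V] [ρ.IsIrreducible]
    {U : Submodule F V} (hU : U ≠ ⊥)
    (hind : letI := submoduleAction ρ
      iSupIndep fun W : MulAction.orbit G U => (W : Submodule F V)) :
    letI := submoduleAction ρ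
    Module.finrank F V = Nat.card (MulAction.orbit G U) * Module.finrank F U := by
  classical
  let _ := submoduleAction ρ
  have : Finite (MulAction.orbit G U) := (Set.finite_range fun g : G => g • U).to_subtype
  have := Fintype.ofFinite (MulAction.orbit G U)
  have hrank (W : MulAction.orbit G U) : Module.finrank F W = Module.finrank F U := by
    obtain ⟨_, g, rfl⟩ := W
    exact finrank_map_apply g U
  have hint := DirectSum.isInternal_submodule_of_iSupIndep_of_iSup_eq_top hind
    (iSup_orbit_eq_top hU)
  rw [← (LinearEquiv.ofBijective (DirectSum.coeLinearMap _) hint).finrank_eq,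
    Module.finrank_directSum, Finset.sum_congr rfl fun W _ => hrank W, Finset.sum_const,
    Finset.card_univ, smul_eq_mul, Nat.card_eq_fintype_card]

lemma weightSpace_eq_top_of_prime [Finite G] [FiniteDimensional F V] [ρ.IsIrreducible]
    (hV : (Module.finrank F V).Prime) (hG : ¬ Module.finrank F V ∣ Nat.card G) [N.Normal]
    (hN : ∀ x ∈ N, ∀ y ∈ N, Commute (ρ x) (ρ y)) {χ : N → F} (hχ : weightSpace ρ N χ ≠ ⊥) :
    weightSpace ρ N χ = ⊤ := by
  let _ := submoduleAction ρ
  set U := weightSpace ρ N χ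
  have hweight (W : MulAction.orbit G U) : ∃ ψ, weightSpace ρ N ψ = W := by
    obtain ⟨_, g, rfl⟩ := W
    exact ⟨_, (map_weightSpace g χ).symm⟩
  choose ψ hψ using hweight
  have hind : iSupIndep fun W : MulAction.orbit G U => (W : Submodule F V) := by
    simp only [← hψ]
    exact (iSupIndep_weightSpace hN).comp fun W W' h =>
      Subtype.ext <| (hψ W).symm.trans <| (congrArg _ h).trans (hψ W')
  have hmul := finrank_eq_card_orbit_mul hχ hind
  obtain h | h := (Nat.dvd_prime hV).1 (Dvd.intro _ hmul.symm)
  · exact Submodule.eq_top_of_finrank_eq (by rw [hmul, h, one_mul])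
  · refine absurd ?_ hG
    rw [← h, Nat.card_congr (MulAction.orbitEquivQuotientStabilizer G U)]
    exact Subgroup.card_quotient_dvd_card _

lemma le_scalarSubgroup_of_common_eigenvector [Finite G] [FiniteDimensional F V]
    [ρ.IsIrreducible] (hV : (Module.finrank F V).Prime) (hG : ¬ Module.finrank F V ∣ Nat.card G)
    [N.Normal] (hN : ∀ x ∈ N, ∀ y ∈ N, Commute (ρ x) (ρ y)) {w : V} (hw : w ≠ 0)
    (hNw : ∀ x ∈ N, ∃ c : F, ρ x w = c • w) : N ≤ scalarSubgroup ρ := by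
  choose! χ hχ using hNw
  have hwχ : w ∈ weightSpace ρ N (fun x => χ x) := mem_weightSpace.2 fun x => hχ x x.2
  have htop := weightSpace_eq_top_of_prime hV hG hN ((Submodule.ne_bot_iff _).2 ⟨w, hwχ, hw⟩)
  exact fun x hx => ⟨χ x, LinearMap.ext fun v =>
    mem_weightSpace.1 (htop ▸ Submodule.mem_top : v ∈ weightSpace ρ N fun x => χ x) ⟨x, hx⟩⟩

lemma commute_of_commutator_le_scalarSubgroup [Finite G] [FiniteDimensional F V]
    (hG : (Module.finrank F V).Coprime (Nat.card G)) (hN : ⁅N, N⁆ ≤ scalarSubgroup ρ) :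
    ∀ x ∈ N, ∀ y ∈ N, Commute (ρ x) (ρ y) := by
  intro x hx y hy
  obtain _ | _ := subsingleton_or_nontrivial V
  · exact Subsingleton.elim _ _
  obtain ⟨c, hc⟩ := hN (Subgroup.commutator_mem_commutator hx hy)
  rw [commutatorElement_def] at hc
  have hdet : c ^ Module.finrank F V = 1 := by
    have hinv (g : G) : LinearMap.det (ρ g) * LinearMap.det (ρ g⁻¹) = 1 := by
      rw [← map_mul, ← map_mul, mul_inv_cancel, map_one, map_one]
    have h := congrArg LinearMap.det hc
    rw [LinearMap.det_smul, map_one, mul_one] at h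
    rw [← h]
    simp only [map_mul]
    linear_combination LinearMap.det (ρ y) * LinearMap.det (ρ y⁻¹) * hinv x + hinv y
  have hord : c ^ Nat.card G = 1 := by
    have h := congrArg (· ^ Nat.card G) hc
    simp only [← map_pow, pow_card_eq_one', map_one, smul_pow, one_pow] at h
    exact smul_left_injective F one_ne_zero (h.symm.trans (one_smul F _).symm)
  have hc1 : c = 1 := by simpa only [hG.gcd_eq_one, pow_one] using pow_gcd_eq_one.2 ⟨hdet, hord⟩
  calc ρ x * ρ y = ρ (x * y * x⁻¹ * y⁻¹) * (ρ y * ρ x) := by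
        rw [← map_mul, ← map_mul, ← map_mul]
        group
    _ = ρ y * ρ x := by rw [hc, hc1, one_smul, one_mul]

lemma exists_common_eigenvector_of_finrank_eq_one {U : Submodule F V}
    (hU : Module.finrank F U = 1) (hN : ∀ x ∈ N, ∀ u ∈ U, ρ x u ∈ U) :
    ∃ w : V, w ≠ 0 ∧ ∀ x ∈ N, ∃ c : F, ρ x w = c • w := by
  obtain ⟨w, hw0, hw⟩ := finrank_eq_one_iff'.1 hU
  refine ⟨w, fun h => hw0 (Subtype.ext h), fun x hx => ?_⟩
  obtain ⟨c, hc⟩ := hw ⟨ρ x w, hN x hx w w.2⟩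
  exact ⟨c, (congrArg Subtype.val hc).symm⟩

lemma exists_common_eigenvector_of_commute (hV : Module.finrank F V = 3) {D : Module.End F V}
    (hND : ∀ x ∈ N, Commute (ρ x) D) (hD : D ≠ 0) (hker : LinearMap.ker D ≠ ⊥) :
    ∃ w : V, w ≠ 0 ∧ ∀ x ∈ N, ∃ c : F, ρ x w = c • w := by
  have := FiniteDimensional.of_finrank_pos (K := F) (V := V) (by lia)
  have hcomm {x : G} (hx : x ∈ N) (v : V) : ρ x (D v) = D (ρ x v) :=
    LinearMap.congr_fun (hND x hx).eq v
  have hrange : 0 < Module.finrank F (LinearMap.range D) :=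
    Nat.pos_of_ne_zero fun h => hD (LinearMap.range_eq_bot.1 (Submodule.finrank_eq_zero.1 h))
  have hker' : 0 < Module.finrank F (LinearMap.ker D) :=
    Nat.pos_of_ne_zero fun h => hker (Submodule.finrank_eq_zero.1 h)
  have hsum := D.finrank_range_add_finrank_ker
  obtain h1 | h1 : Module.finrank F (LinearMap.range D) = 1 ∨
      Module.finrank F (LinearMap.ker D) = 1 := by lia
  · refine exists_common_eigenvector_of_finrank_eq_one h1 ?_
    rintro x hx _ ⟨v, rfl⟩
    exact ⟨ρ x v, (hcomm hx v).symm⟩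
  · refine exists_common_eigenvector_of_finrank_eq_one h1 fun x hx u hu => ?_
    rw [LinearMap.mem_ker] at hu ⊢
    rw [← hcomm hx, hu, map_zero]

lemma exists_common_eigenvector_of_not_isIrreducible [Finite G] [NeZero (Nat.card G : F)]
    (hV : Module.finrank F V = 3) (hρ : ¬ ρ.IsIrreducible) :
    ∃ w : V, w ≠ 0 ∧ ∀ g, ∃ c : F, ρ g w = c • w := by
  have := FiniteDimensional.of_finrank_pos (K := F) (V := V) (by lia)
  have := Module.nontrivial_of_finrank_pos (R := F) (M := V) (by lia)
  have : Nontrivial (Subrepresentation ρ) := ⟨⊥, ⊤, fun h =>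
    bot_ne_top (α := Submodule F V) (congrArg (·.toSubmodule) h)⟩
  obtain ⟨σ, hσ⟩ := not_forall.1 fun h => hρ { eq_bot_or_eq_top := h }
  obtain ⟨hbot, htop⟩ := not_or.1 hσ
  obtain ⟨τ, h⟩ := exists_isCompl σ
  have hsum : Module.finrank F σ.toSubmodule + Module.finrank F τ.toSubmodule = 3 := by
    rw [Submodule.finrank_add_eq_of_isCompl ⟨disjoint_iff.2 (congrArg (·.toSubmodule) h.inf_eq_bot),
      codisjoint_iff.2 (congrArg (·.toSubmodule) h.sup_eq_top)⟩, hV]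
  have finrank_ne_zero {σ : Subrepresentation ρ} (hσ : σ ≠ ⊥) :
      Module.finrank F σ.toSubmodule ≠ 0 := fun h0 =>
    hσ (Subrepresentation.toSubmodule_injective (Submodule.finrank_eq_zero.1 h0))
  have hσ0 := finrank_ne_zero hbot
  have hτ0 := finrank_ne_zero (σ := τ) fun h0 => htop (eq_top_of_isCompl_bot (h0 ▸ h))
  have of_finrank_eq_one (σ : Subrepresentation ρ) (hσ : Module.finrank F σ.toSubmodule = 1) :
      ∃ w : V, w ≠ 0 ∧ ∀ g, ∃ c : F, ρ g w = c • w := by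
    obtain ⟨w, hw0, hw⟩ := exists_common_eigenvector_of_finrank_eq_one (ρ := ρ) (N := ⊤) hσ
      fun g _ => σ.apply_mem_toSubmodule g
    exact ⟨w, hw0, fun g => hw g trivial⟩
  obtain h1 | h1 : Module.finrank F σ.toSubmodule = 1 ∨ Module.finrank F τ.toSubmodule = 1 := by
    lia
  exacts [of_finrank_eq_one σ h1, of_finrank_eq_one τ h1]

theorem exists_normal_fixedPointFree [Finite G] [Group.IsSolvable G] [ρ.IsIrreducible]
    (hV : Module.finrank F V = 3) (hG : ¬ 3 ∣ Nat.card G) (hρ : scalarSubgroup ρ ≠ ⊤) :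
    ∃ N : Subgroup G, N.Normal ∧ ¬ N ≤ scalarSubgroup ρ ∧
      ∀ x ∈ N, ∀ v : V, v ≠ 0 → ρ x v = v → ρ x = 1 := by
  have := FiniteDimensional.of_finrank_pos (K := F) (V := V) (by lia)
  obtain ⟨N, hnormal, hN, hcomm⟩ := exists_normal_not_le_commutator_le hρ
  have hN' := commute_of_commutator_le_scalarSubgroup (ρ := ρ)
    (hV ▸ (Nat.prime_three.coprime_iff_not_dvd.2 hG)) hcomm
  refine ⟨N, hnormal, hN, fun x hx v hv hxv => of_not_not fun hx1 => hN ?_⟩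
  obtain ⟨w, hw, hNw⟩ := exists_common_eigenvector_of_commute (N := N) (ρ := ρ) hV
    (D := ρ x - 1) (fun y hy => (hN' y hy x hx).sub_right (Commute.one_right _))
    (sub_ne_zero.2 hx1) ((Submodule.ne_bot_iff _).2 ⟨v, by simp [hxv], hv⟩)
  exact le_scalarSubgroup_of_common_eigenvector (hV ▸ Nat.prime_three) (hV ▸ hG) hN' hw hNw

end Clifford

section Reflection

open Module (preReflection preReflection_apply)

variable {F G V : Type*} [Field F] [Group G] [AddCommGroup V] [Module F V]

/-- `v ↦ v - α v • a` is a reflection lying in the image of `ρ`. -/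
def ContainsReflection (ρ : Representation F G V) (a : V) (α : Module.Dual F V) : Prop :=
  α a = 2 ∧ ∃ r, ρ r = preReflection a α

variable {ρ : Representation F G V} {a b c : V} {α β γ : Module.Dual F V}

lemma eq_zero_of_unipotent_of_pow_eq_one {f : Module.End F V} {u v : V} {m : ℕ}
    (hm : (m : F) ≠ 0) (hf : f ^ m = 1) (hu : f u = u + v) (hv : f v = v) : v = 0 := by
  have hpow (k : ℕ) : (f ^ k) u = u + (k : F) • v := by
    induction k with
    | zero => simp
    | succ k ih =>
      rw [pow_succ', Module.End.mul_apply, ih, map_add, map_smul, hu, hv]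
      push_cast
      module
  have h := hpow m
  rw [hf, Module.End.one_apply, left_eq_add] at h
  exact (smul_eq_zero.1 h).resolve_left hm

lemma ContainsReflection.apply_eq_zero_symm [Finite G] [NeZero (Nat.card G : F)] [NeZero (2 : F)]
    (ha : ContainsReflection ρ a α) (hb : ContainsReflection ρ b β) (h : α b = 0) : β a = 0 := by
  obtain ⟨haa, r, hr⟩ := ha
  obtain ⟨hbb, s, hs⟩ := hb
  have hm : ρ ((s * r) ^ 2) ^ Nat.card G = 1 := by rw [← map_pow, pow_card_eq_one', map_one]
  have hfa : ρ ((s * r) ^ 2) a = a + (-(2 * β a)) • b := by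
    simp only [pow_two, map_mul, Module.End.mul_apply, hr, hs, preReflection_apply, map_sub,
      map_smul, h, haa, hbb]
    module
  have hfb : ρ ((s * r) ^ 2) b = b := by
    simp only [pow_two, map_mul, Module.End.mul_apply, hr, hs, preReflection_apply, map_sub,
      map_smul, h, hbb]
    module
  have h0 := eq_zero_of_unipotent_of_pow_eq_one (NeZero.ne (Nat.card G : F)) hm hfa
    (by rw [map_smul, hfb])
  have hβ := congrArg β h0
  rw [map_smul, hbb, map_zero, smul_eq_mul, neg_mul, neg_eq_zero] at hβ
  have h2 := NeZero.ne (2 : F)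
  simpa only [mul_eq_zero, h2, or_false, false_or] using hβ

lemma exists_apply_eq_smul_of_commute_preReflection [NeZero (2 : F)] {f : Module.End F V}
    (ha : α a = 2) (hf : Commute f (preReflection a α)) :
    ∃ k : F, f a = k • a ∧ ∀ v, α (f v) = k * α v := by
  have h2 := NeZero.ne (2 : F)
  have hfv (v : V) : α v • f a = α (f v) • a := by
    have h := LinearMap.congr_fun hf.eq v
    simp only [Module.End.mul_apply, preReflection_apply, map_sub, map_smul] at h
    exact sub_right_injective h
  have hfa : f a = ((2 : F)⁻¹ * α (f a)) • a := by
    rw [mul_smul, ← hfv a, ha, inv_smul_smul₀ h2]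
  refine ⟨_, hfa, fun v => ?_⟩
  have h := congrArg α (hfv v)
  rw [map_smul, map_smul, ha, smul_eq_mul, smul_eq_mul] at h
  field_simp
  linear_combination -h

lemma eq_smul_one_of_commute_preReflection [NeZero (2 : F)] {f : Module.End F V}
    (hspan : Submodule.span F {a, b, c} = ⊤) (ha : α a = 2) (hb : β b = 2) (hc : γ c = 2)
    (hba : β a ≠ 0) (hbc : β c ≠ 0) (hfa : Commute f (preReflection a α))
    (hfb : Commute f (preReflection b β)) (hfc : Commute f (preReflection c γ)) :
    ∃ k : F, f = k • 1 := by
  obtain ⟨k, hkb, hk⟩ := exists_apply_eq_smul_of_commute_preReflection hb hfb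
  have same_eigenvalue {v : V} (hv : β v ≠ 0) (h : ∃ l : F, f v = l • v) : f v = k • v := by
    obtain ⟨l, hl⟩ := h
    have h := hk v
    rw [hl, map_smul, smul_eq_mul] at h
    rw [hl, mul_right_cancel₀ hv h]
  have hka := same_eigenvalue hba
    ((exists_apply_eq_smul_of_commute_preReflection ha hfa).imp fun _ h => h.1)
  have hkc := same_eigenvalue hbc
    ((exists_apply_eq_smul_of_commute_preReflection hc hfc).imp fun _ h => h.1)
  refine ⟨k, LinearMap.ext_on hspan ?_⟩
  rintro v (rfl | rfl | rfl) <;> assumption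

lemma ContainsReflection.preReflection_mem (ha : ContainsReflection ρ a α)
    (σ : Subrepresentation ρ) : ∀ u ∈ σ, preReflection a α u ∈ σ := by
  obtain ⟨_, r, hr⟩ := ha
  exact hr ▸ σ.apply_mem_toSubmodule r

lemma ContainsReflection.mem_of_apply_ne_zero (ha : ContainsReflection ρ a α)
    (σ : Subrepresentation ρ) {u : V} (hu : u ∈ σ) (hαu : α u ≠ 0) : a ∈ σ := by
  have h := σ.toSubmodule.sub_mem hu (ha.preReflection_mem σ u hu)
  rwa [preReflection_apply, sub_sub_cancel, σ.toSubmodule.smul_mem_iff hαu] at h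

lemma ContainsReflection.mem_or_mem [NeZero (2 : F)] (ha : ContainsReflection ρ a α)
    {σ τ : Subrepresentation ρ} (h : IsCompl σ τ) : a ∈ σ ∨ a ∈ τ := by
  have htop : σ.toSubmodule ⊔ τ.toSubmodule = ⊤ := congrArg (·.toSubmodule) h.sup_eq_top
  obtain ⟨u, hu, v, hv, huv⟩ := Submodule.mem_sup.1 (htop ▸ Submodule.mem_top : a ∈ _)
  by_cases hαu : α u = 0
  · refine .inr (ha.mem_of_apply_ne_zero τ hv fun hαv => NeZero.ne (2 : F) ?_)
    rw [← ha.1, ← huv, map_add, hαu, hαv, add_zero]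
  · exact .inl (ha.mem_of_apply_ne_zero σ hu hαu)

lemma isIrreducible_of_containsReflection [Finite G] [NeZero (Nat.card G : F)] [NeZero (2 : F)]
    (hspan : Submodule.span F {a, b, c} = ⊤) (ha : ContainsReflection ρ a α)
    (hb : ContainsReflection ρ b β) (hc : ContainsReflection ρ c γ) (hba : β a ≠ 0)
    (hbc : β c ≠ 0) : ρ.IsIrreducible := by
  have hb0 : b ≠ 0 := by
    rintro rfl
    exact NeZero.ne (2 : F) (hb.1.symm.trans (map_zero β))
  have eq_top {σ τ : Subrepresentation ρ} (h : IsCompl σ τ) (hbσ : b ∈ σ) : σ = ⊤ := by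
    have mem_of_linked {d : V} {δ : Module.Dual F V} (hd : ContainsReflection ρ d δ)
        (hbd : β d ≠ 0) : d ∈ σ := by
      refine (hd.mem_or_mem h).resolve_right fun hdτ => hb0 ?_
      have hbot : σ.toSubmodule ⊓ τ.toSubmodule = ⊥ := congrArg (·.toSubmodule) h.inf_eq_bot
      exact (Submodule.mem_bot F).1 (hbot ▸ ⟨hbσ, hb.mem_of_apply_ne_zero τ hdτ hbd⟩)
    refine Subrepresentation.toSubmodule_injective (top_le_iff.1 (hspan ▸ Submodule.span_le.2 ?_))
    rintro v (rfl | rfl | rfl)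
    exacts [mem_of_linked ha hba, hbσ, mem_of_linked hc hbc]
  have : Nontrivial (Subrepresentation ρ) := ⟨⊥, ⊤, fun h => hb0 <| (Submodule.mem_bot F).1 <|
    (congrArg (·.toSubmodule) h : (⊥ : Submodule F V) = ⊤) ▸ Submodule.mem_top⟩
  refine { eq_bot_or_eq_top := fun σ => ?_ }
  obtain ⟨τ, h⟩ := exists_isCompl σ
  obtain hbσ | hbτ := hb.mem_or_mem h
  · exact .inr (eq_top h hbσ)
  · exact .inl (eq_bot_of_top_isCompl (eq_top h.symm hbτ ▸ h.symm))

lemma scalarSubgroup_ne_top_of_containsReflection [NeZero (2 : F)]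
    (hV : 1 < Module.finrank F V) (ha : ContainsReflection ρ a α) : scalarSubgroup ρ ≠ ⊤ := by
  obtain ⟨haa, r, hr⟩ := ha
  intro htop
  obtain ⟨k, hk⟩ : r ∈ scalarSubgroup ρ := htop ▸ Subgroup.mem_top r
  have := FiniteDimensional.of_finrank_pos (K := F) (V := V) (by lia)
  obtain ⟨v, hv, hv0⟩ := (Submodule.ne_bot_iff _).1
    (LinearMap.ker_ne_bot_of_finrank_lt (f := α) (by rwa [Module.finrank_self]))
  have hk1 : k = 1 := by
    have h := LinearMap.congr_fun (hr.symm.trans hk) v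
    rw [preReflection_apply, hv, zero_smul, sub_zero] at h
    exact smul_left_injective F hv0 (h.symm.trans (one_smul F v).symm)
  have h := LinearMap.congr_fun (hr.symm.trans hk) a
  rw [hk1, one_smul, Module.End.one_apply, preReflection_apply, sub_eq_self] at h
  have h0 := congrArg α h
  rw [haa, map_smul, haa, map_zero, smul_eq_mul] at h0
  exact mul_ne_zero (NeZero.ne (2 : F)) (NeZero.ne (2 : F)) h0

lemma exists_fixed_of_preReflection (hV : 2 < Module.finrank F V) {r : G}
    (hr : ρ r = preReflection a α) (x : G) :
    ∃ v : V, v ≠ 0 ∧ ρ (x * (r * x⁻¹ * r⁻¹)) v = v := by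
  have := FiniteDimensional.of_finrank_pos (K := F) (V := V) (by lia)
  obtain ⟨v, hv, hv0⟩ := (Submodule.ne_bot_iff _).1
    (LinearMap.ker_ne_bot_of_finrank_lt (f := α.prod (α ∘ₗ ρ x⁻¹)) (by simpa using hV))
  obtain ⟨hv1, hv2⟩ : α v = 0 ∧ α (ρ x⁻¹ v) = 0 := by simpa using hv
  have hrv : ρ r⁻¹ v = v := by
    rw [ρ.inv_apply_eq_iff, hr, preReflection_apply, hv1, zero_smul, sub_zero]
  refine ⟨v, hv0, ?_⟩
  rw [map_mul, map_mul, map_mul, Module.End.mul_apply, Module.End.mul_apply,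
    Module.End.mul_apply, hrv, hr, preReflection_apply, hv2, zero_smul, sub_zero,
    ρ.self_inv_apply]

lemma commute_preReflection_of_fixedPointFree (hV : 2 < Module.finrank F V) {N : Subgroup G}
    [hnormal : N.Normal] (hN : ∀ x ∈ N, ∀ v : V, v ≠ 0 → ρ x v = v → ρ x = 1)
    (ha : ContainsReflection ρ a α) {x : G} (hx : x ∈ N) :
    Commute (ρ x) (preReflection a α) := by
  obtain ⟨_, r, hr⟩ := ha
  obtain ⟨v, hv0, hv⟩ := exists_fixed_of_preReflection hV hr x
  have h1 := hN _ (N.mul_mem hx (hnormal.conj_mem _ (N.inv_mem hx) r)) v hv0 hv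
  calc ρ x * preReflection a α = ρ (x * (r * x⁻¹ * r⁻¹)) * (ρ r * ρ x) := by
        rw [← hr, ← map_mul, ← map_mul, ← map_mul]
        group
    _ = preReflection a α * ρ x := by rw [h1, one_mul, hr]

theorem not_linked_of_span_eq_top [Finite G] [Group.IsSolvable G] [NeZero (Nat.card G : F)]
    [NeZero (2 : F)] (hG : ¬ 3 ∣ Nat.card G) (hV : Module.finrank F V = 3)
    (hspan : Submodule.span F {a, b, c} = ⊤) (ha : ContainsReflection ρ a α)
    (hb : ContainsReflection ρ b β) (hc : ContainsReflection ρ c γ) :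
    ¬ (β a ≠ 0 ∧ β c ≠ 0) := by
  rintro ⟨hba, hbc⟩
  have := isIrreducible_of_containsReflection hspan ha hb hc hba hbc
  have hscalar := scalarSubgroup_ne_top_of_containsReflection (by lia) ha
  obtain ⟨N, _, hN, hfree⟩ := exists_normal_fixedPointFree hV hG hscalar
  have commute_of_mem {d : V} {δ : Module.Dual F V} (hd : ContainsReflection ρ d δ) {x : G}
      (hx : x ∈ N) : Commute (ρ x) (preReflection d δ) :=
    commute_preReflection_of_fixedPointFree (by lia) hfree hd hx
  exact hN fun x hx => eq_smul_one_of_commute_preReflection hspan ha.1 hb.1 hc.1 hba hbc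
    (commute_of_mem ha hx) (commute_of_mem hb hx) (commute_of_mem hc hx)

/-- The stabilizer of the subspace `U` in `G`. -/
def submoduleStabilizer (ρ : Representation F G V) (U : Submodule F V) : Subgroup G :=
  letI := submoduleAction ρ
  MulAction.stabilizer G U

lemma mem_submoduleStabilizer {U : Submodule F V} {g : G} :
    g ∈ submoduleStabilizer ρ U ↔ U.map (ρ g) = U := Iff.rfl

/-- The representation of the stabilizer of the subspace `U` on `U`. -/
def stabilizerRepresentation (ρ : Representation F G V) (U : Submodule F V) :
    Representation F (submoduleStabilizer ρ U) U :=
  Representation.subrepresentation (ρ.comp (submoduleStabilizer ρ U).subtype) U fun g =>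
    Submodule.map_le_iff_le_comap.1 (mem_submoduleStabilizer.1 g.2).le

lemma ContainsReflection.domRestrict (ha : ContainsReflection ρ a α) {U : Submodule F V}
    (haU : a ∈ U) :
    ContainsReflection (stabilizerRepresentation ρ U) ⟨a, haU⟩ (α.domRestrict U) := by
  obtain ⟨haa, r, hr⟩ := ha
  have hle : U.map (ρ r) ≤ U := by
    rintro _ ⟨u, hu, rfl⟩
    rw [hr, preReflection_apply]
    exact U.sub_mem hu (U.smul_mem _ haU)
  have hge : U ≤ U.map (ρ r) := fun u hu => ⟨ρ r u, hle ⟨u, hu, rfl⟩, by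
    rw [hr, Module.involutive_preReflection haa u]⟩
  exact ⟨haa, ⟨r, mem_submoduleStabilizer.2 (hle.antisymm hge)⟩,
    LinearMap.ext fun u => Subtype.ext (LinearMap.congr_fun hr u)⟩

theorem not_linked_of_linearIndependent [Finite G] [Group.IsSolvable G]
    [NeZero (Nat.card G : F)] [NeZero (2 : F)] (hG : ¬ 3 ∣ Nat.card G)
    (hli : LinearIndependent F ![a, b, c]) (ha : ContainsReflection ρ a α)
    (hb : ContainsReflection ρ b β) (hc : ContainsReflection ρ c γ) :
    ¬ (β a ≠ 0 ∧ β c ≠ 0) := by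
  have hrange : Set.range ![a, b, c] = {a, b, c} := by
    simp only [Matrix.range_cons, Matrix.range_empty, Set.union_empty, Set.singleton_union]
  set U := Submodule.span F {a, b, c} with hU
  have haU : a ∈ U := Submodule.subset_span (by simp)
  have hbU : b ∈ U := Submodule.subset_span (by simp)
  have hcU : c ∈ U := Submodule.subset_span (by simp)
  have hrank : Module.finrank F U = 3 := by
    rw [hU, ← hrange, finrank_span_eq_card hli, Fintype.card_fin]
  have hdvd := (submoduleStabilizer ρ U).card_subgroup_dvd_card
  have : NeZero (Nat.card (submoduleStabilizer ρ U) : F) := ⟨fun h => NeZero.ne (Nat.card G : F) <|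
    zero_dvd_iff.1 <| h ▸ Nat.cast_dvd_cast hdvd⟩
  have hspan : Submodule.span F {(⟨a, haU⟩ : U), ⟨b, hbU⟩, ⟨c, hcU⟩} = ⊤ := by
    rw [← Submodule.span_span_coe_preimage]
    congr 1
    ext u
    simp [Subtype.ext_iff]
  exact not_linked_of_span_eq_top (V := U) (fun h => hG (h.trans hdvd)) hrank hspan
    (ha.domRestrict haU) (hb.domRestrict hbU) (hc.domRestrict hcU)

lemma ContainsReflection.conj (ha : ContainsReflection ρ a α) (g : G) :
    ContainsReflection ρ (ρ g a) (α ∘ₗ ρ g⁻¹) := by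
  obtain ⟨haa, r, hr⟩ := ha
  refine ⟨by rw [LinearMap.comp_apply, ρ.inv_self_apply, haa], g * r * g⁻¹, ?_⟩
  ext v
  rw [map_mul, map_mul, Module.End.mul_apply, Module.End.mul_apply, hr, preReflection_apply,
    preReflection_apply, map_sub, map_smul, ρ.self_inv_apply, LinearMap.comp_apply]

end Reflection

section Linked

lemma linearIndependent_of_det_ne_zero {ι κ F : Type*} [Field F] [Fintype κ] [DecidableEq κ]
    {v : κ → ι → F} (s : κ → ι) (h : (Matrix.of fun r c => v r (s c)).det ≠ 0) :
    LinearIndependent F v :=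
  .of_comp (LinearMap.funLeft F F s) (Matrix.linearIndependent_rows_of_det_ne_zero h)

variable {ι F : Type*} [Fintype ι] [DecidableEq ι] [Field F] {H : Subgroup (GL ι F)}

/-- The representation of a linear group on column vectors. -/
def naturalRepresentation (H : Subgroup (GL ι F)) : Representation F H (ι → F) :=
  (Matrix.toLinAlgEquiv' : Matrix ι ι F ≃ₐ[F] _).toMonoidHom.comp
    ((Units.coeHom _).comp H.subtype)

lemma naturalRepresentation_apply (g : H) (v : ι → F) :
    naturalRepresentation H g v = (g.1 : Matrix ι ι F) *ᵥ v := rfl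

/-- `H` contains every diagonal matrix with a single entry `-1` and all others `1`; these matrices
generate the group of diagonal sign matrices. -/
def ContainsSigns (H : Subgroup (GL ι F)) : Prop :=
  ∀ i, ∃ r ∈ H, (r : Matrix ι ι F) = Matrix.diagonal (Function.update 1 i (-1))

/-- Two coordinates are linked if some element of `H` has a column in which both entries are
nonzero. -/
def Linked (H : Subgroup (GL ι F)) (i k : ι) : Prop :=
  ∃ g ∈ H, ∃ j, (g : Matrix ι ι F) i j ≠ 0 ∧ (g : Matrix ι ι F) k j ≠ 0

lemma Linked.refl (i : ι) : Linked H i i := ⟨1, H.one_mem, i, by simp⟩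

lemma Linked.symm {i k : ι} (h : Linked H i k) : Linked H k i := by
  obtain ⟨g, hg, j, hi, hk⟩ := h
  exact ⟨g, hg, j, hk, hi⟩

lemma ContainsSigns.containsReflection_single (hH : ContainsSigns H) (i : ι) :
    ContainsReflection (naturalRepresentation H) (Pi.single i 1)
      ((2 : F) • LinearMap.proj i) := by
  obtain ⟨r, hr, hrd⟩ := hH i
  refine ⟨by simp, ⟨r, hr⟩, LinearMap.ext fun v => funext fun k => ?_⟩
  rw [naturalRepresentation_apply, hrd, Matrix.mulVec_diagonal]
  obtain rfl | hki := eq_or_ne k i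
  · simp only [Module.preReflection_apply, Pi.sub_apply, Pi.smul_apply, LinearMap.smul_apply,
      LinearMap.proj_apply, Pi.single_eq_same, Function.update_self, smul_eq_mul]
    ring
  · simp [Module.preReflection_apply, hki]

lemma ContainsSigns.containsReflection_col (hH : ContainsSigns H) (g : H) (j : ι) :
    ContainsReflection (naturalRepresentation H) ((g.1 : Matrix ι ι F).col j)
      (((2 : F) • LinearMap.proj j) ∘ₗ naturalRepresentation H g⁻¹) := by
  have h := (hH.containsReflection_single j).conj g
  rwa [naturalRepresentation_apply, Matrix.mulVec_single_one] at h

variable [Finite H] [NeZero (Nat.card H : F)] [NeZero (2 : F)]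

lemma ContainsSigns.inv_apply_ne_zero_iff (hH : ContainsSigns H) {g : GL ι F} (hg : g ∈ H)
    {i j : ι} : (↑g⁻¹ : Matrix ι ι F) j i ≠ 0 ↔ (g : Matrix ι ι F) i j ≠ 0 := by
  have hcol := hH.containsReflection_col ⟨g, hg⟩ j
  have hsingle := hH.containsReflection_single i
  have h2 := NeZero.ne (2 : F)
  refine not_congr ⟨fun h => ?_, fun h => ?_⟩
  · simpa [h2] using hcol.apply_eq_zero_symm hsingle
      (by simpa [naturalRepresentation_apply, h2] using h)
  · simpa [naturalRepresentation_apply, h2] using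
      hsingle.apply_eq_zero_symm hcol (by simp [h])

variable [Group.IsSolvable H]

lemma ContainsSigns.apply_eq_zero_of_apply_ne_zero (hH : ContainsSigns H)
    (h3 : ¬ 3 ∣ Nat.card H) {g : GL ι F} (hg : g ∈ H) {i k l j : ι} (hik : i ≠ k) (hil : i ≠ l)
    (hkl : k ≠ l) (hi : (g : Matrix ι ι F) i j ≠ 0) (hk : (g : Matrix ι ι F) k j ≠ 0) :
    (g : Matrix ι ι F) l j = 0 := by
  by_contra hl
  have h2 := NeZero.ne (2 : F)
  have hi' := (hH.inv_apply_ne_zero_iff hg).2 hi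
  have hk' := (hH.inv_apply_ne_zero_iff hg).2 hk
  refine not_linked_of_linearIndependent h3 ?_ (hH.containsReflection_single i)
    (hH.containsReflection_col ⟨g, hg⟩ j) (hH.containsReflection_single k) ⟨?_, ?_⟩
  · refine linearIndependent_of_det_ne_zero ![i, l, k] ?_
    simpa [Matrix.det_fin_three, hik, hik.symm, hil.symm, hkl.symm] using hl
  · simpa [naturalRepresentation_apply, h2] using hi'
  · simpa [naturalRepresentation_apply, h2] using hk'

lemma ContainsSigns.not_linked_of_ne (hH : ContainsSigns H) (h3 : ¬ 3 ∣ Nat.card H)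
    {i k m : ι} (hik : i ≠ k) (him : i ≠ m) (hkm : k ≠ m) (h : Linked H i k) :
    ¬ Linked H k m := by
  obtain ⟨g, hg, j, hi, hk⟩ := h
  rintro ⟨x, hx, l, hk', hm⟩
  have hgm := hH.apply_eq_zero_of_apply_ne_zero h3 hg hik him hkm hi hk
  have hxi := hH.apply_eq_zero_of_apply_ne_zero h3 hx hkm hik.symm him.symm hk' hm
  have h2 := NeZero.ne (2 : F)
  refine not_linked_of_linearIndependent h3 ?_ (hH.containsReflection_col ⟨g, hg⟩ j)
    (hH.containsReflection_single k) (hH.containsReflection_col ⟨x, hx⟩ l) ⟨?_, ?_⟩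
  · refine linearIndependent_of_det_ne_zero ![i, k, m] ?_
    simpa [Matrix.det_fin_three, hik, hkm.symm, hgm, hxi] using ⟨hi, hm⟩
  · simpa [h2] using hk
  · simpa [h2] using hk'

lemma ContainsSigns.linked_trans (hH : ContainsSigns H) (h3 : ¬ 3 ∣ Nat.card H) {i k m : ι}
    (hik : Linked H i k) (hkm : Linked H k m) : Linked H i m := by
  by_contra him
  refine hH.not_linked_of_ne h3 ?_ ?_ ?_ hik hkm <;> rintro rfl
  exacts [him hkm, him (.refl i), him hik]

lemma ContainsSigns.linked_of_apply_ne_zero (hH : ContainsSigns H) (h3 : ¬ 3 ∣ Nat.card H)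
    {g : GL ι F} (hg : g ∈ H) {i i' j j' : ι} (hi : (g : Matrix ι ι F) i j ≠ 0)
    (hi' : (g : Matrix ι ι F) i' j' ≠ 0) (hj : Linked H j j') : Linked H i i' := by
  obtain ⟨x, hx, l, hjl, hjl'⟩ := hj
  have exists_row {j : ι} (hj : (x : Matrix ι ι F) j l ≠ 0) :
      ∃ m, (g : Matrix ι ι F) m j ≠ 0 ∧ (↑(g * x) : Matrix ι ι F) m l ≠ 0 := by
    have hxj := (hH.inv_apply_ne_zero_iff hx).2 hj
    rw [show x⁻¹ = (g * x)⁻¹ * g by group, Units.val_mul, Matrix.mul_apply] at hxj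
    obtain ⟨m, -, hm⟩ := Finset.exists_ne_zero_of_sum_ne_zero hxj
    exact ⟨m, right_ne_zero_of_mul hm,
      (hH.inv_apply_ne_zero_iff (H.mul_mem hg hx)).1 (left_ne_zero_of_mul hm)⟩
  obtain ⟨m, hgm, hm⟩ := exists_row hjl
  obtain ⟨m', hgm', hm'⟩ := exists_row hjl'
  have him : Linked H i m := ⟨g, hg, j, hi, hgm⟩
  have hmm' : Linked H m m' := ⟨g * x, H.mul_mem hg hx, l, hm, hm'⟩
  have hmi' : Linked H m' i' := ⟨g, hg, j', hgm', hi'⟩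
  exact hH.linked_trans h3 (hH.linked_trans h3 him hmm') hmi'

lemma ContainsSigns.linked_iff (hH : ContainsSigns H) (h3 : ¬ 3 ∣ Nat.card H) {g : GL ι F}
    (hg : g ∈ H) {i i' j j' : ι} (hi : (g : Matrix ι ι F) i j ≠ 0)
    (hi' : (g : Matrix ι ι F) i' j' ≠ 0) : Linked H i i' ↔ Linked H j j' :=
  ⟨hH.linked_of_apply_ne_zero h3 (H.inv_mem hg) ((hH.inv_apply_ne_zero_iff hg).2 hi)
    ((hH.inv_apply_ne_zero_iff hg).2 hi'), hH.linked_of_apply_ne_zero h3 hg hi hi'⟩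

end Linked

section BlockMonomial

variable {ι F : Type*} [Field F] {b : ι → ℕ} {pr : ι → ι}

/-- `g` permutes the blocks of coordinates given by the fibres of `b` (which sends coordinates to
block numbers), and has no zero column. -/
structure BlockMonomial (b : ι → ℕ) (g : Matrix ι ι F) : Prop where
  eq_iff_eq {i i' j j' : ι} (h : g i j ≠ 0) (h' : g i' j' ≠ 0) : b i = b i' ↔ b j = b j'
  exists_apply_ne_zero (j : ι) : ∃ i, g i j ≠ 0

lemma BlockMonomial.le_of_apply_ne_zero {g : Matrix ι ι F} (hg : BlockMonomial b g) {N : ℕ}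
    (hN : ∀ i j, b j < N → g i j ≠ 0 → b i = b j) {i j : ι} (hj : N ≤ b j) (hij : g i j ≠ 0) :
    N ≤ b i := by
  by_contra! hi
  obtain ⟨k, hk⟩ := hg.exists_apply_ne_zero i
  have hij' := (hg.eq_iff_eq hij hk).1 (hN k i hi hk).symm
  lia

/-- `pr` embeds every block, that is every fibre of `b`, into the preceding one. -/
structure IsBlockChain (b : ι → ℕ) (pr : ι → ι) : Prop where
  apply_add_one {j : ι} (hj : b j ≠ 0) : b (pr j) + 1 = b j
  injOn : Set.InjOn pr {j | b j ≠ 0}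

lemma IsBlockChain.exists_apply_eq_one {b : ι → ℕ} {pr : ι → ι} (h : IsBlockChain b pr) {j : ι}
    (hj : b j ≠ 0) : ∃ f, b f = 1 := by
  obtain ⟨N, hN⟩ := Nat.exists_eq_succ_of_ne_zero hj
  clear hj
  induction N generalizing j with
  | zero => exact ⟨j, hN⟩
  | succ N ih => exact ih (j := pr j) (by have := h.apply_add_one (j := j) (by lia); lia)

lemma exists_isBlockChain [Finite ι] (hb : ∀ k, {i | b i = k + 1}.ncard ≤ {i | b i = k}.ncard) :
    ∃ pr, IsBlockChain b pr := by
  obtain hι | hι := isEmpty_or_nonempty ι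
  · exact ⟨id, fun {j} => isEmptyElim j, fun j => isEmptyElim j⟩
  have hemb (k : ℕ) : ∃ φ : ι → ι, {i | b i = k + 1} ⊆ φ ⁻¹' {i | b i = k} ∧
      Set.InjOn φ {i | b i = k + 1} :=
    (Set.toFinite _).exists_injOn_of_encard_le <| by
      rw [← (Set.toFinite _).cast_ncard_eq, ← (Set.toFinite _).cast_ncard_eq]
      exact_mod_cast hb k
  choose φ hmaps hinj using hemb
  have hpr {j : ι} (hj : b j ≠ 0) : b (φ (b j - 1) j) = b j - 1 :=
    hmaps (b j - 1) (show b j = b j - 1 + 1 by lia)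
  refine ⟨fun j => φ (b j - 1) j, fun hj => by rw [hpr hj]; lia, fun j hj k hk hjk => ?_⟩
  have hbjk : b j - 1 = b k - 1 := by rw [← hpr hj, ← hpr hk]; exact congrArg b hjk
  simp only [Set.mem_ofPred_eq] at hj hk
  exact hinj (b k - 1) (show b j = b k - 1 + 1 by lia) (show b k = b k - 1 + 1 by lia)
    (by simpa only [hbjk] using hjk)

lemma exists_antitone_labelling [Finite ι] (s : Setoid ι) :
    ∃ b : ι → ℕ, (∀ i j, b i = b j ↔ s i j) ∧
      ∀ k, {i | b i = k + 1}.ncard ≤ {i | b i = k}.ncard := by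
  let e := Finite.equivFin (Quotient s)
  let size (k : Fin (Nat.card (Quotient s))) : ℕᵒᵈ :=
    OrderDual.toDual {i : ι | e (Quotient.mk s i) = k}.ncard
  let σ := Tuple.sort size
  refine ⟨fun i => σ.symm (e (Quotient.mk s i)), fun i j => ?_, fun k => ?_⟩
  · rw [Fin.val_inj, σ.symm.injective.eq_iff, e.injective.eq_iff, Quotient.eq]
  have fibre_eq {k : ℕ} (hk : k < Nat.card (Quotient s)) :
      {i | (σ.symm (e (Quotient.mk s i)) : ℕ) = k} = {i | e (Quotient.mk s i) = σ ⟨k, hk⟩} :=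
    Set.ext fun i => (Fin.ext_iff (b := ⟨k, hk⟩)).symm.trans σ.symm_apply_eq
  by_cases hk : k + 1 < Nat.card (Quotient s)
  · rw [fibre_eq hk, fibre_eq (k.lt_succ_self.trans hk)]
    exact Tuple.monotone_sort size (Fin.mk_le_mk.2 k.le_succ)
  · have hempty : {i | (σ.symm (e (Quotient.mk s i)) : ℕ) = k + 1} = ∅ :=
      Set.eq_empty_of_forall_notMem fun i hi => hk (hi ▸ Fin.is_lt _)
    rw [hempty, Set.ncard_empty]
    exact Nat.zero_le _

variable [Fintype ι] [DecidableEq ι]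

/-- The matrix of the nilpotent map sending the basis vector at `j` to the one at `pr j`, and
killing those in block `0`. -/
def shiftMatrix (F : Type*) [Field F] (b : ι → ℕ) (pr : ι → ι) : Matrix ι ι F :=
  Matrix.of fun i j => if b j ≠ 0 ∧ i = pr j then 1 else 0

lemma mul_shiftMatrix_apply (g : Matrix ι ι F) {j : ι} (hj : b j ≠ 0) (i : ι) :
    (g * shiftMatrix F b pr) i j = g i (pr j) := by
  simp [shiftMatrix, Matrix.mul_apply, hj]

lemma exists_of_shiftMatrix_mul_apply_ne_zero {g : Matrix ι ι F} {i j : ι}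
    (h : (shiftMatrix F b pr * g) i j ≠ 0) : ∃ k, b k ≠ 0 ∧ i = pr k ∧ g k j ≠ 0 := by
  rw [Matrix.mul_apply] at h
  obtain ⟨k, -, hk⟩ := Finset.exists_ne_zero_of_sum_ne_zero h
  have hik := left_ne_zero_of_mul hk
  simp only [shiftMatrix, Matrix.of_apply, ne_eq, ite_eq_right_iff, one_ne_zero, imp_false,
    not_not] at hik
  exact ⟨k, hik.1, hik.2, right_ne_zero_of_mul hk⟩

lemma IsBlockChain.shiftMatrix_mul_apply (h : IsBlockChain b pr) (g : Matrix ι ι F) {i : ι}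
    (hi : b i ≠ 0) (j : ι) : (shiftMatrix F b pr * g) (pr i) j = g i j := by
  rw [Matrix.mul_apply, Finset.sum_eq_single i]
  · simp [shiftMatrix, hi]
  · intro k _ hk
    have hne : ¬ (b k ≠ 0 ∧ pr i = pr k) := fun ⟨hbk, hik⟩ => hk (h.injOn hbk hi hik.symm)
    simp [shiftMatrix, hne]
  · simp

lemma IsBlockChain.det_one_add_shiftMatrix (h : IsBlockChain b pr) :
    (1 + shiftMatrix F b pr).det = 1 := by
  have shift_eq_zero {i j : ι} (hij : b j ≤ b i) : shiftMatrix F b pr i j = 0 := by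
    refine if_neg ?_
    rintro ⟨hj, rfl⟩
    have := h.apply_add_one hj
    lia
  have htri : (1 + shiftMatrix F b pr).BlockTriangular b := fun i j hij => by
    rw [Matrix.add_apply, Matrix.one_apply_ne (by rintro rfl; exact hij.false),
      shift_eq_zero hij.le, add_zero]
  rw [htri.det]
  refine Finset.prod_eq_one fun k _ => ?_
  have hblock : (1 + shiftMatrix F b pr).toSquareBlock b k = 1 := by
    ext ⟨i, rfl⟩ ⟨j, hj⟩
    rw [Matrix.toSquareBlock_def, Matrix.of_apply, Matrix.add_apply, shift_eq_zero hj.le, add_zero]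
    simp [Matrix.one_apply]
  rw [hblock, Matrix.det_one]

lemma IsBlockChain.shiftMatrix_mul_apply_eq_zero {g : Matrix ι ι F} (h : IsBlockChain b pr)
    (hg : BlockMonomial b g) {i j k : ι} (hk : g k j ≠ 0) (hi : b k ≤ b i) :
    (shiftMatrix F b pr * g) i j = 0 := by
  by_contra hne
  obtain ⟨l, hl, rfl, hlj⟩ := exists_of_shiftMatrix_mul_apply_ne_zero hne
  have hkl := (hg.eq_iff_eq hk hlj).2 rfl
  have := h.apply_add_one hl
  lia

lemma IsBlockChain.mul_shiftMatrix_apply_eq_zero {g : Matrix ι ι F} (h : IsBlockChain b pr)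
    {i j : ι} (hg : ∀ i k, b k < b j → g i k ≠ 0 → b i = b k) (hi : b j ≤ b i) :
    (g * shiftMatrix F b pr) i j = 0 := by
  by_cases hj : b j = 0
  · simp [shiftMatrix, Matrix.mul_apply, hj]
  · rw [mul_shiftMatrix_apply g hj]
    by_contra hne
    have hpr := h.apply_add_one hj
    have := hg i (pr j) (by lia) hne
    lia

/-- The inductive step in comparing `g` with its conjugate `g'` by `1 + P`, for the shift matrix
`P`: columns are treated in the order of their blocks. -/
lemma IsBlockChain.apply_eq_apply_of_column {g g' : Matrix ι ι F} (h : IsBlockChain b pr)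
    (hg : BlockMonomial b g) (hg' : BlockMonomial b g')
    (hgg' : (1 + shiftMatrix F b pr) * g = g' * (1 + shiftMatrix F b pr)) {j : ι}
    (ih : ∀ i k, b k < b j → (g i k ≠ 0 → b i = b k) ∧ g i k = g' i k) (i : ι) :
    (g i j ≠ 0 → b i = b j) ∧ g i j = g' i j := by
  have ih' : ∀ i k, b k < b j → g' i k ≠ 0 → b i = b k := fun i k hk =>
    (ih i k hk).2 ▸ (ih i k hk).1
  have hge {i : ι} (hij : g i j ≠ 0) : b j ≤ b i :=
    hg.le_of_apply_ne_zero (fun i k hk => (ih i k hk).1) le_rfl hij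
  have hge' {i : ι} (hij : g' i j ≠ 0) : b j ≤ b i := hg'.le_of_apply_ne_zero ih' le_rfl hij
  have entry {i : ι} (hi : b j ≤ b i) : g i j + (shiftMatrix F b pr * g) i j = g' i j := by
    have hentry := congrFun₂ hgg' i j
    rwa [add_mul, mul_add, one_mul, mul_one, Matrix.add_apply, Matrix.add_apply,
      h.mul_shiftMatrix_apply_eq_zero ih' hi, add_zero] at hentry
  have hblock {i : ι} (hij : g i j ≠ 0) : b i = b j := by
    by_contra hne
    have hi := hge hij
    have hpr := h.apply_add_one (show b i ≠ 0 by lia)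
    have hg'i : g' i j ≠ 0 := by
      rwa [← entry hi, h.shiftMatrix_mul_apply_eq_zero hg hij le_rfl, add_zero]
    have hpri : g (pr i) j = 0 := by
      by_contra hpri
      have := (hg.eq_iff_eq hij hpri).2 rfl
      lia
    have hg'pr : g' (pr i) j ≠ 0 := by
      rwa [← entry (by lia), hpri, zero_add, h.shiftMatrix_mul_apply g (by lia)]
    have := (hg'.eq_iff_eq hg'i hg'pr).2 rfl
    lia
  refine ⟨hblock, ?_⟩
  by_cases hi : b j ≤ b i
  · obtain ⟨k, hk⟩ := hg.exists_apply_ne_zero j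
    rw [← entry hi, h.shiftMatrix_mul_apply_eq_zero hg hk ((hblock hk).trans_le hi), add_zero]
  · rw [not_imp_comm.1 hge hi, not_imp_comm.1 hge' hi]

lemma IsBlockChain.blockDiagonal_and_commute {g g' : Matrix ι ι F} (h : IsBlockChain b pr)
    (hg : BlockMonomial b g) (hg' : BlockMonomial b g')
    (hgg' : (1 + shiftMatrix F b pr) * g = g' * (1 + shiftMatrix F b pr)) :
    (∀ i j, b i ≠ b j → g i j = 0) ∧ Commute (shiftMatrix F b pr) g := by
  have key (N : ℕ) : ∀ i j, b j = N → (g i j ≠ 0 → b i = b j) ∧ g i j = g' i j := by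
    induction N using Nat.strong_induction_on with
    | _ N ih =>
      rintro i j rfl
      exact h.apply_eq_apply_of_column hg hg' hgg' (fun i k hk => ih _ hk i k rfl) i
  obtain rfl : g = g' := Matrix.ext fun i j => (key _ i j rfl).2
  refine ⟨fun i j => not_imp_comm.1 (key _ i j rfl).1, ?_⟩
  rwa [add_mul, mul_add, one_mul, mul_one, add_right_inj] at hgg'

lemma IsBlockChain.apply_pr_pr {g : Matrix ι ι F} (h : IsBlockChain b pr)
    (hg : Commute (shiftMatrix F b pr) g) {i j : ι} (hi : b i ≠ 0) (hj : b j ≠ 0) :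
    g (pr i) (pr j) = g i j := by
  rw [← h.shiftMatrix_mul_apply g hi, hg.eq, mul_shiftMatrix_apply g hj]

lemma IsBlockChain.eq_smul_one {g : Matrix ι ι F} (h : IsBlockChain b pr)
    (hdiag : ∀ i j, b i ≠ b j → g i j = 0) (hg : Commute (shiftMatrix F b pr) g) {c : F}
    (h0 : ∀ i j, b i = 0 → b j = 0 → g i j = (c • 1 : Matrix ι ι F) i j) : g = c • 1 := by
  have key (N : ℕ) : ∀ i j, b i = N → b j = N → g i j = (c • 1 : Matrix ι ι F) i j := by
    induction N with
    | zero => exact h0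
    | succ N ih =>
      intro i j hi hj
      have hi0 : b i ≠ 0 := by lia
      have hj0 : b j ≠ 0 := by lia
      have hi' := h.apply_add_one hi0
      have hj' := h.apply_add_one hj0
      rw [← h.apply_pr_pr hg hi0 hj0, ih _ _ (by lia) (by lia)]
      simp only [Matrix.smul_apply, Matrix.one_apply, h.injOn.eq_iff hi0 hj0]
  ext i j
  by_cases hij : b i = b j
  · exact key _ i j rfl hij.symm
  · rw [Matrix.smul_apply, Matrix.one_apply_ne (ne_of_apply_ne b hij), smul_zero]
    exact hdiag i j hij

lemma BlockMonomial.col_of_transvection_mul {g g' : Matrix ι ι F} {e f : ι}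
    (hg : BlockMonomial b g) (hg' : BlockMonomial b g') (hef : b e ≠ b f)
    (hdiag : ∀ i j, b i ≠ b j → g i j = 0)
    (h : transvection e f 1 * g = g' * transvection e f 1) :
    g e e = g f f ∧ ∀ i ≠ e, g i e = 0 := by
  have hfe : f ≠ e := fun h => hef (congrArg b h.symm)
  have hcol (i : ι) : g' i e = g i e := by
    have hi := congrFun₂ h i e
    rw [mul_transvection_apply_of_ne _ _ _ _ hfe.symm] at hi
    rw [← hi]
    by_cases hie : i = e
    · rw [hie, transvection_mul_apply_same, hdiag f e hef.symm, mul_zero, add_zero]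
    · rw [transvection_mul_apply_of_ne _ _ _ _ hie]
  have hcolf {i : ι} (hi : i ≠ e) : g i f = g' i f + g i e := by
    have hif := congrFun₂ h i f
    rwa [transvection_mul_apply_of_ne _ _ _ _ hi, mul_transvection_apply_same, hcol, one_mul]
      at hif
  obtain ⟨k, hk⟩ := hg.exists_apply_ne_zero f
  have hbk : b k = b f := not_imp_comm.1 (hdiag k f) hk
  have hk' : g' k f ≠ 0 := by
    rwa [hcolf (ne_of_apply_ne b (hbk.trans_ne hef.symm)), hdiag k e (hbk.trans_ne hef.symm),
      add_zero] at hk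
  have hf' {i : ι} (hi : b i = b e) : g' i f = 0 := by
    by_contra hne
    exact hef (hi.symm.trans (((hg'.eq_iff_eq hne hk').2 rfl).trans hbk))
  constructor
  · have hentry := congrFun₂ h e f
    rw [transvection_mul_apply_same, mul_transvection_apply_same, hcol, hf' rfl, hdiag e f hef,
      zero_add, zero_add, one_mul, one_mul] at hentry
    exact hentry.symm
  · intro i hi
    by_cases hie : b i = b e
    · rw [← zero_add (g i e), ← hf' hie, ← hcolf hi, hdiag i f (hie.trans_ne hef), hf' hie]
    · exact hdiag i e hie

lemma BlockMonomial.row_of_transvection_mul {g g' : Matrix ι ι F} {e f : ι}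
    (hg' : BlockMonomial b g') (hef : b e ≠ b f) (hdiag : ∀ i j, b i ≠ b j → g i j = 0)
    (h : transvection f e 1 * g = g' * transvection f e 1) {j : ι} (hj : j ≠ e) : g e j = 0 := by
  by_contra hne
  have hej : b e = b j := not_imp_comm.1 (hdiag e j) hne
  have hfj : g f j = 0 := hdiag f j (hej ▸ hef.symm)
  have hf := congrFun₂ h f j
  rw [transvection_mul_apply_same, mul_transvection_apply_of_ne _ _ _ _ hj, hfj, zero_add,
    one_mul] at hf
  have he := congrFun₂ h e j
  rw [transvection_mul_apply_of_ne _ _ _ _ (ne_of_apply_ne b hef),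
    mul_transvection_apply_of_ne _ _ _ _ hj] at he
  exact hef ((hg'.eq_iff_eq (he ▸ hne) (hf ▸ hne)).2 rfl)

lemma hasCentralIntersection_of_matrix {H : Subgroup (GL ι F)} {X Y Z : Matrix ι ι F}
    (hX : X.det = 1) (hY : Y.det = 1) (hZ : Z.det = 1)
    (h : ∀ g ∈ H, ∀ g₁ ∈ H, ∀ g₂ ∈ H, ∀ g₃ ∈ H, X * g.1 = g₁.1 * X → Y * g.1 = g₂.1 * Y →
      Z * g.1 = g₃.1 * Z → ∃ c : F, g.1 = c • 1) :
    HasCentralIntersection (Matrix.GeneralLinearGroup.det (n := ι) (R := F)).ker H := by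
  have exists_lift {A : Matrix ι ι F} (hA : A.det = 1) :
      ∃ a ∈ (Matrix.GeneralLinearGroup.det (n := ι) (R := F)).ker, a.1 = A :=
    ⟨Matrix.GeneralLinearGroup.mk'' A (hA ▸ isUnit_one), Units.ext hA, rfl⟩
  obtain ⟨x, hx, rfl⟩ := exists_lift hX
  obtain ⟨y, hy, rfl⟩ := exists_lift hY
  obtain ⟨z, hz, rfl⟩ := exists_lift hZ
  refine ⟨x, hx, y, hy, z, hz, ?_⟩
  rintro g ⟨⟨⟨hg, hgx⟩, hgy⟩, hgz⟩
  have conj_mul (u : GL ι F) : u.1 * g.1 = (u * g * u⁻¹).1 * u.1 := by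
    rw [← Units.val_mul, ← Units.val_mul, inv_mul_cancel_right]
  obtain ⟨c, hc⟩ := h g hg _ (mem_conjBy.1 hgx) _ (mem_conjBy.1 hgy) _ (mem_conjBy.1 hgz)
    (conj_mul x) (conj_mul y) (conj_mul z)
  refine Matrix.GeneralLinearGroup.mem_center_iff_val_mem_range_scalar.2 ⟨c, ?_⟩
  rw [hc, Matrix.scalar_apply, Matrix.smul_one_eq_diagonal]

lemma IsBlockChain.hasCentralIntersection {H : Subgroup (GL ι F)} (h : IsBlockChain b pr)
    (hH : ∀ g ∈ H, BlockMonomial b g.1) {e f : ι} (he : b e = 0) (hf : b f = 1)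
    (hef : ∀ i, b i = 0 → i = e ∨ i = pr f) :
    HasCentralIntersection (Matrix.GeneralLinearGroup.det (n := ι) (R := F)).ker H := by
  have hbef : b e ≠ b f := by lia
  have hne : e ≠ f := ne_of_apply_ne b hbef
  refine hasCentralIntersection_of_matrix h.det_one_add_shiftMatrix
    (det_transvection_of_ne e f hne 1) (det_transvection_of_ne f e hne.symm 1) ?_
  intro g hg g₁ hg₁ g₂ hg₂ g₃ hg₃ hx hy hz
  obtain ⟨hdiag, hcomm⟩ := h.blockDiagonal_and_commute (hH g hg) (hH g₁ hg₁) hx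
  obtain ⟨hee, hcol⟩ := (hH g hg).col_of_transvection_mul (hH g₂ hg₂) hbef hdiag hy
  have hrow {j : ι} (hj : j ≠ e) := (hH g₃ hg₃).row_of_transvection_mul hbef hdiag hz hj
  have hpr : g.1 (pr f) (pr f) = g.1 e e :=
    (h.apply_pr_pr hcomm (by lia) (by lia)).trans hee.symm
  refine ⟨g.1 e e, h.eq_smul_one hdiag hcomm fun i j hi hj => ?_⟩
  rw [Matrix.smul_apply, smul_eq_mul]
  by_cases hij : i = j
  · subst hij
    rw [Matrix.one_apply_eq, mul_one]
    obtain rfl | rfl := hef i hi <;> [rfl; exact hpr]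
  · rw [Matrix.one_apply_ne hij, mul_zero]
    obtain rfl | rfl := hef i hi
    · exact hrow (Ne.symm hij)
    · obtain rfl | rfl := hef j hj
      exacts [hcol _ hij, absurd rfl hij]

end BlockMonomial

section Conjugation

variable {ι F : Type*} [Fintype ι] [DecidableEq ι] [Field F]

/-- The representation of a linear group on the traceless matrices by conjugation. -/
def conjRepresentation (H : Subgroup (GL ι F)) :
    Representation F H (LinearMap.ker (Matrix.traceLinearMap ι F F)) where
  toFun g := (LinearMap.mulLeftRight F (g.1.1, g.1⁻¹.1)).restrict fun X hX => by
    rw [LinearMap.mem_ker, Matrix.traceLinearMap_apply] at hX ⊢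
    rw [LinearMap.mulLeftRight_apply, Matrix.trace_units_conj, hX]
  map_one' := LinearMap.ext fun X => Subtype.ext <| by simp
  map_mul' g h := LinearMap.ext fun X => Subtype.ext <| by simp [mul_assoc]

variable {H : Subgroup (GL ι F)}

lemma conjRepresentation_apply_eq_iff {g : H}
    {X Y : LinearMap.ker (Matrix.traceLinearMap ι F F)} :
    conjRepresentation H g X = Y ↔ g.1.1 * X.1 = Y.1 * g.1.1 := by
  rw [Subtype.ext_iff]
  exact Units.mul_inv_eq_iff_eq_mul _

lemma mul_eq_one_of_trace_mul_ne_zero (g : GL ι F) {A B : Matrix ι ι F} {μ ν : F}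
    (hA : g.1 * A = μ • (A * g.1)) (hB : g.1 * B = ν • (B * g.1)) (h : (A * B).trace ≠ 0) :
    μ * ν = 1 := by
  have hAB : g.1 * (A * B) * g⁻¹.1 = (μ * ν) • (A * B) := by
    rw [← mul_assoc, hA, smul_mul_assoc, mul_assoc, hB, mul_smul_comm, smul_smul, smul_mul_assoc,
      ← mul_assoc, Units.mul_inv_cancel_right]
  have htr := congrArg Matrix.trace hAB
  rw [Matrix.trace_units_conj, Matrix.trace_smul, smul_eq_mul] at htr
  exact mul_right_cancel₀ h (htr.symm.trans (one_mul _).symm)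

lemma Linked.eq_of_diagonal_semiinvariant {i k : ι} (hik : Linked H i k) {d : ι → F}
    (hd : ∀ j, d j ≠ 0)
    (h : ∀ g ∈ H, ∃ μ : F, g.1 * Matrix.diagonal d = μ • (Matrix.diagonal d * g.1)) :
    d i = d k := by
  obtain ⟨g, hg, j, hi, hk⟩ := hik
  obtain ⟨μ, hμ⟩ := h g hg
  have hμd {l : ι} (hl : g.1 l j ≠ 0) : d j = μ * d l := by
    have hlj := congr_fun₂ hμ l j
    rw [Matrix.mul_diagonal, Matrix.smul_apply, Matrix.diagonal_mul, smul_eq_mul] at hlj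
    exact mul_left_cancel₀ hl (by linear_combination hlj)
  have hμ0 : μ ≠ 0 := left_ne_zero_of_mul (hμd hi ▸ hd j)
  exact mul_left_cancel₀ hμ0 ((hμd hi).symm.trans (hμd hk))

end Conjugation

section TwoByTwo

variable {F : Type*} [Field F] {H : Subgroup (GL (Fin 2) F)}

lemma finrank_ker_traceLinearMap :
    Module.finrank F (LinearMap.ker (Matrix.traceLinearMap (Fin 2) F F)) = 3 := by
  have hrange : LinearMap.range (Matrix.traceLinearMap (Fin 2) F F) = ⊤ :=
    LinearMap.range_eq_top.2 fun c => ⟨!![c, 0; 0, 0], by simp [Matrix.trace_fin_two]⟩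
  have hsum := (Matrix.traceLinearMap (Fin 2) F F).finrank_range_add_finrank_ker
  rw [hrange, finrank_top, Module.finrank_self, Module.finrank_matrix] at hsum
  simpa [Nat.add_comm 1] using hsum

lemma eq_smul_one_of_trace_eq_zero_imp {g : Matrix (Fin 2) (Fin 2) F} {μ : F}
    (h : ∀ A : Matrix (Fin 2) (Fin 2) F, A.trace = 0 → g * A = μ • (A * g)) :
    ∃ c : F, g = c • 1 := by
  have h10 : g 1 0 = 0 := by
    simpa [Matrix.mul_apply, -Matrix.cons_mul] using
      congr_fun₂ (h !![0, 1; 0, 0] (by simp [Matrix.trace_fin_two])) 1 1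
  have h01 : g 0 1 = 0 := by
    simpa [Matrix.mul_apply, -Matrix.cons_mul] using
      congr_fun₂ (h !![0, 0; 1, 0] (by simp [Matrix.trace_fin_two])) 0 0
  have h00 : g 0 0 = μ * g 1 1 := by
    simpa [Matrix.mul_apply, -Matrix.cons_mul] using
      congr_fun₂ (h !![0, 1; 0, 0] (by simp [Matrix.trace_fin_two])) 0 1
  have h11 : g 1 1 = μ * g 1 1 := by
    simpa [Matrix.mul_apply, -Matrix.cons_mul] using
      congr_fun₂ (h !![1, 0; 0, -1] (by simp [Matrix.trace_fin_two])) 1 1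
  refine ⟨g 0 0, ?_⟩
  ext i j
  fin_cases i <;> fin_cases j <;> simp [h10, h01, h00, ← h11]

lemma exists_ne_zero_sq_mul_ne [NeZero (2 : F)] (hF : Nat.card F ≠ 3) (b : F) {c : F}
    (hc : c ≠ 0) : ∃ s : F, s ≠ 0 ∧ s ^ 2 * c ≠ b := by
  obtain rfl | hcb := eq_or_ne c b
  · have hneg : (1 : F) ≠ -1 := fun h => NeZero.ne (2 : F) (by linear_combination h)
    obtain ⟨s, hs⟩ : ∃ s, s ∉ ({0, 1, -1} : Set F) := by
      by_contra! hall
      rw [← Set.ncard_univ, ← Set.eq_univ_of_forall hall] at hF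
      exact hF (Set.ncard_eq_three.2 ⟨0, 1, -1, zero_ne_one, by simp, hneg, rfl⟩)
    simp only [Set.mem_insert_iff, Set.mem_singleton_iff, not_or] at hs
    refine ⟨s, hs.1, fun h => ?_⟩
    exact (sq_eq_one_iff.1 (mul_right_cancel₀ hc (h.trans (one_mul c).symm))).elim hs.2.1 hs.2.2
  · exact ⟨1, one_ne_zero, by rwa [one_pow, one_mul]⟩

lemma mul_unipotent_conj_eq_smul {g g₁ : Matrix (Fin 2) (Fin 2) F} {b c t μ : F}
    (hg : !![1, t; 0, 1] * g = g₁ * !![1, t; 0, 1])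
    (h : g₁ * !![0, b; c, 0] = μ • (!![0, b; c, 0] * g₁)) :
    g * !![-(t * c), b - t ^ 2 * c; c, t * c] =
      μ • (!![-(t * c), b - t ^ 2 * c; c, t * c] * g) := by
  have hconj : !![-(t * c), b - t ^ 2 * c; c, t * c] =
      !![1, -t; 0, 1] * !![0, b; c, 0] * !![1, t; 0, 1] := by
    simp only [Matrix.mul_fin_two]
    ring_nf
  have hinv : !![1, -t; 0, 1] * !![1, t; 0, 1] = (1 : Matrix (Fin 2) (Fin 2) F) := by
    simp [Matrix.one_fin_two]
  have hg' : g * !![1, -t; 0, 1] = !![1, -t; 0, 1] * g₁ := by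
    calc g * !![1, -t; 0, 1] = !![1, -t; 0, 1] * (!![1, t; 0, 1] * g) * !![1, -t; 0, 1] := by
          rw [← mul_assoc, hinv, one_mul]
      _ = !![1, -t; 0, 1] * g₁ := by
          rw [hg, mul_assoc, mul_assoc, mul_eq_one_comm.1 hinv, mul_one]
  rw [hconj, ← mul_assoc, ← mul_assoc, hg', mul_assoc _ g₁, h, mul_smul_comm, smul_mul_assoc,
    mul_assoc _ _ g, hg]
  simp only [mul_assoc]

lemma eq_smul_one_of_unipotent_conj_eq_smul [NeZero (2 : F)] {g : Matrix (Fin 2) (Fin 2) F}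
    {b c s μ : F} (hc : c ≠ 0) (hs : s ≠ 0)
    (h : ∀ t ∈ ({0, s, -s} : Set F), g * !![-(t * c), b - t ^ 2 * c; c, t * c] =
      μ • (!![-(t * c), b - t ^ 2 * c; c, t * c] * g)) :
    ∃ d : F, g = d • 1 := by
  refine eq_smul_one_of_trace_eq_zero_imp (μ := μ) fun A hA => ?_
  have h2 := NeZero.ne (2 : F)
  obtain ⟨α, β, γ, rfl⟩ : ∃ α β γ : F, A =
      α • !![-(0 * c), b - 0 ^ 2 * c; c, 0 * c] + β • !![-(s * c), b - s ^ 2 * c; c, s * c] +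
      γ • !![-(-s * c), b - (-s) ^ 2 * c; c, -s * c] := by
    -- The solution of `α + β + γ = A₁₀ / c`, `β + γ = p` and `γ - β = q`.
    let p := (b * A 1 0 / c - A 0 1) / (s ^ 2 * c)
    let q := A 0 0 / (s * c)
    refine ⟨A 1 0 / c - p, (p - q) / 2, (p + q) / 2, ?_⟩
    have hA11 : A 1 1 = -A 0 0 := by linear_combination (Matrix.trace_fin_two A).symm.trans hA
    ext i j
    fin_cases i <;> fin_cases j <;>
      simp only [p, q, hA11, Fin.zero_eta, Fin.mk_one, Matrix.add_apply, Matrix.smul_apply,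
        Matrix.of_apply, Matrix.cons_val_zero, Matrix.cons_val_one, smul_eq_mul] <;>
      field_simp <;> ring
  rw [mul_add, mul_add, mul_smul_comm, mul_smul_comm, mul_smul_comm, h 0 (by simp), h s (by simp),
    h (-s) (by simp), add_mul, add_mul]
  simp only [smul_mul_assoc, smul_add, smul_comm μ]

lemma ContainsSigns.exists_diag (hH : ContainsSigns H) :
    ∃ r ∈ H, (r : Matrix (Fin 2) (Fin 2) F) = !![-1, 0; 0, 1] := by
  obtain ⟨r, hr, hrd⟩ := hH 0
  refine ⟨r, hr, hrd.trans ?_⟩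
  ext i j
  fin_cases i <;> fin_cases j <;> simp

variable [NeZero (2 : F)]

lemma ContainsSigns.scalarSubgroup_conjRepresentation_ne_top (hH : ContainsSigns H) :
    scalarSubgroup (conjRepresentation H) ≠ ⊤ := by
  obtain ⟨r, hr, hrd⟩ := hH.exists_diag
  intro htop
  obtain ⟨c, hc⟩ :
      (⟨r, hr⟩ : H) ∈ scalarSubgroup (conjRepresentation H) := htop ▸ trivial
  have hmul (X : Matrix (Fin 2) (Fin 2) F) (hX : X.trace = 0) : r.1 * X = c • X * r.1 :=
    conjRepresentation_apply_eq_iff.1 (LinearMap.congr_fun hc ⟨X, hX⟩)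
  have hneg : -1 = c * -1 := by
    simpa [hrd] using congr_fun₂ (hmul !![1, 0; 0, -1] (by simp [Matrix.trace_fin_two])) 1 1
  have hone : -1 = c := by
    simpa [hrd] using congr_fun₂ (hmul !![0, 1; 0, 0] (by simp [Matrix.trace_fin_two])) 0 1
  exact NeZero.ne (2 : F) (by linear_combination -hneg - hone)

lemma ContainsSigns.not_isIrreducible_conjRepresentation [Finite H] [Group.IsSolvable H]
    (hH : ContainsSigns H) (h3 : ¬ 3 ∣ Nat.card H) :
    ¬ (conjRepresentation H).IsIrreducible := by
  intro hirr
  obtain ⟨N, -, hN, hfree⟩ := exists_normal_fixedPointFree (ρ := conjRepresentation H)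
    finrank_ker_traceLinearMap h3 hH.scalarSubgroup_conjRepresentation_ne_top
  refine hN fun x hx => ⟨1, ?_⟩
  rw [one_smul]
  -- `x` fixes its own traceless part.
  have htrace : x.1.1 - ((2 : F)⁻¹ * x.1.1.trace) • 1 ∈
      LinearMap.ker (Matrix.traceLinearMap (Fin 2) F F) := by
    rw [LinearMap.mem_ker, Matrix.traceLinearMap_apply, Matrix.trace_sub, Matrix.trace_smul,
      Matrix.trace_one, Fintype.card_fin, smul_eq_mul, mul_right_comm, Nat.cast_ofNat,
      inv_mul_cancel₀ (NeZero.ne (2 : F)), one_mul, sub_self]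
  by_cases hx0 : x.1.1 - ((2 : F)⁻¹ * x.1.1.trace) • 1 = 0
  · refine LinearMap.ext fun X => conjRepresentation_apply_eq_iff.2 ?_
    rw [sub_eq_zero.1 hx0, smul_mul_assoc, one_mul, Module.End.one_apply, mul_smul_comm, mul_one]
  · refine hfree x hx ⟨_, htrace⟩ ((Submodule.mk_eq_zero _ htrace).not.2 hx0)
      (conjRepresentation_apply_eq_iff.2 ?_)
    rw [mul_sub, sub_mul, mul_smul_comm, mul_one, smul_mul_assoc, one_mul]

lemma ContainsSigns.apply_zero_zero_eq_zero (hH : ContainsSigns H) (h01 : Linked H 0 1) {a b c : F}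
    (h : ∀ g ∈ H, ∃ μ : F, g.1 * !![a, b; c, -a] = μ • (!![a, b; c, -a] * g.1)) : a = 0 := by
  obtain ⟨r, hr, hrd⟩ := hH.exists_diag
  have h2 := NeZero.ne (2 : F)
  by_contra ha
  obtain ⟨μ, hμ⟩ := h r hr
  have hμ1 : μ = 1 := by simpa [hrd, ha] using congr_fun₂ hμ 0 0
  have hb : b = 0 := by
    have h01 : -b = μ * b := by simpa [hrd] using congr_fun₂ hμ 0 1
    simpa [h2] using show 2 * b = 0 by linear_combination -h01 - b * hμ1
  have hc : c = 0 := by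
    have h10 : c = -(μ * c) := by simpa [hrd] using congr_fun₂ hμ 1 0
    simpa [h2] using show 2 * c = 0 by linear_combination h10 - c * hμ1
  have hd : !![a, b; c, -a] = Matrix.diagonal ![a, -a] := by
    rw [hb, hc]
    ext i j
    fin_cases i <;> fin_cases j <;> rfl
  have haa : a = -a := h01.eq_of_diagonal_semiinvariant (d := ![a, -a])
    (by simp [Fin.forall_fin_two, ha]) (hd ▸ h)
  exact mul_ne_zero h2 ha (by linear_combination haa)

variable [Finite H] [NeZero (Nat.card H : F)]

lemma ContainsSigns.exists_semiinvariant [Group.IsSolvable H] (hH : ContainsSigns H)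
    (h3 : ¬ 3 ∣ Nat.card H) :
    ∃ X : Matrix (Fin 2) (Fin 2) F, X.trace = 0 ∧ X ≠ 0 ∧
      ∀ g ∈ H, ∃ μ : F, g.1 * X = μ • (X * g.1) := by
  obtain ⟨X, hX, h⟩ := exists_common_eigenvector_of_not_isIrreducible
    (ρ := conjRepresentation H) finrank_ker_traceLinearMap
    (hH.not_isIrreducible_conjRepresentation h3)
  refine ⟨X, X.2, fun h0 => hX (Subtype.ext h0), fun g hg => ?_⟩
  obtain ⟨μ, hμ⟩ := h ⟨g, hg⟩
  exact ⟨μ, (conjRepresentation_apply_eq_iff.1 hμ).trans (smul_mul_assoc ..)⟩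

lemma ContainsSigns.exists_apply_ne_zero (hH : ContainsSigns H) (h01 : Linked H 0 1) :
    (∃ g ∈ H, g.1 0 1 ≠ 0) ∧ ∃ g ∈ H, g.1 1 0 ≠ 0 := by
  obtain ⟨g, hg, j, h0, h1⟩ := h01
  fin_cases j
  · exact ⟨⟨_, H.inv_mem hg, (hH.inv_apply_ne_zero_iff hg).2 h1⟩, g, hg, h1⟩
  · exact ⟨⟨g, hg, h0⟩, _, H.inv_mem hg, (hH.inv_apply_ne_zero_iff hg).2 h0⟩

lemma ContainsSigns.exists_antidiagonal_semiinvariant [Group.IsSolvable H] (hH : ContainsSigns H)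
    (h3 : ¬ 3 ∣ Nat.card H) (h01 : Linked H 0 1) :
    ∃ b c : F, b ≠ 0 ∧ c ≠ 0 ∧
      ∀ g ∈ H, ∃ μ : F, g.1 * !![0, b; c, 0] = μ • (!![0, b; c, 0] * g.1) := by
  obtain ⟨X, htr, hX, hsemi⟩ := hH.exists_semiinvariant h3
  have hX11 : X 1 1 = -X 0 0 := by linear_combination (Matrix.trace_fin_two X).symm.trans htr
  rw [Matrix.eta_fin_two X, hX11] at hX hsemi
  rw [hH.apply_zero_zero_eq_zero h01 hsemi, neg_zero] at hX hsemi
  obtain ⟨⟨g, hg, hg01⟩, k, hk, hk10⟩ := hH.exists_apply_ne_zero h01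
  refine ⟨X 0 1, X 1 0, fun hb => hX ?_, fun hc => hX ?_, hsemi⟩
  · obtain ⟨μ, hμ⟩ := hsemi g hg
    have hc : X 1 0 = 0 := by
      simpa [hb, Matrix.mul_apply, -Matrix.cons_mul, hg01] using congr_fun₂ hμ 0 0
    ext i j
    fin_cases i <;> fin_cases j <;> simp [hb, hc]
  · obtain ⟨μ, hμ⟩ := hsemi k hk
    have hb : X 0 1 = 0 := by
      simpa [hc, Matrix.mul_apply, -Matrix.cons_mul, hk10] using congr_fun₂ hμ 1 1
    ext i j
    fin_cases i <;> fin_cases j <;> simp [hb, hc]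

lemma ContainsSigns.hasCentralIntersection_of_linked (hF : Nat.card F ≠ 3)
    [Group.IsSolvable H] (hH : ContainsSigns H) (h3 : ¬ 3 ∣ Nat.card H) (h01 : Linked H 0 1) :
    HasCentralIntersection (Matrix.GeneralLinearGroup.det (n := Fin 2) (R := F)).ker H := by
  obtain ⟨b, c, hb, hc, h⟩ := hH.exists_antidiagonal_semiinvariant h3 h01
  obtain ⟨s, hs, hsb⟩ := exists_ne_zero_sq_mul_ne hF (2 * b) hc
  refine hasCentralIntersection_of_matrix (X := !![1, s; 0, 1]) (Y := !![1, -s; 0, 1]) (Z := 1)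
    (by simp) (by simp) Matrix.det_one fun g hg g₁ hg₁ g₂ hg₂ _ _ hX hY _ => ?_
  obtain ⟨μ, hμ⟩ := h g hg
  have hμ2 : μ * μ = 1 := mul_eq_one_of_trace_mul_ne_zero g hμ hμ <| by
    simpa [Matrix.trace_fin_two, ← two_mul, mul_comm c b, NeZero.ne] using ⟨hb, hc⟩
  have eigenvalue_eq {t : F} (ht : t ^ 2 * c ≠ 2 * b) {k : GL (Fin 2) F} (hk : k ∈ H)
      (htk : !![1, t; 0, 1] * g.1 = k.1 * !![1, t; 0, 1]) :
      g.1 * !![-(t * c), b - t ^ 2 * c; c, t * c] =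
        μ • (!![-(t * c), b - t ^ 2 * c; c, t * c] * g.1) := by
    obtain ⟨ν, hν⟩ := h k hk
    have hconj := mul_unipotent_conj_eq_smul htk hν
    have hμν : μ * ν = 1 := mul_eq_one_of_trace_mul_ne_zero g hμ hconj <| by
      have htr : (!![0, b; c, 0] * !![-(t * c), b - t ^ 2 * c; c, t * c]).trace =
          c * (2 * b - t ^ 2 * c) := by
        rw [Matrix.mul_fin_two, Matrix.trace_fin_two_of]
        ring
      exact htr ▸ mul_ne_zero hc (sub_ne_zero.2 ht.symm)
    rwa [left_inv_eq_right_inv ((mul_comm ..).trans hμν) hμ2] at hconj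
  refine eq_smul_one_of_unipotent_conj_eq_smul (b := b) (μ := μ) hc hs ?_
  rintro t (rfl | rfl | rfl)
  · simpa using hμ
  · exact eigenvalue_eq hsb hg₁ hX
  · exact eigenvalue_eq (by rwa [neg_sq]) hg₂ hY

end TwoByTwo

section SolvableGL

lemma isSolvable_perm_of_card_eq_four {α : Type*} (h : Nat.card α = 4) :
    Group.IsSolvable (Equiv.Perm α) := by
  classical
  have : Finite α := Nat.finite_of_card_ne_zero (h.symm ▸ four_ne_zero)
  have := Fintype.ofFinite α
  have := alternatingGroup.normal_kleinFour h
  have := alternatingGroup.kleinFour_isKleinFour h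
  have hV : Group.IsSolvable (alternatingGroup.kleinFour α) :=
    Group.isSolvable_of_comm IsKleinFour.isMulCommutative.is_comm.comm
  have hA : Group.IsSolvable (alternatingGroup α) :=
    Group.isSolvable_of_ker_le_range (alternatingGroup.kleinFour α).subtype Abelianization.of <| by
      rw [Abelianization.ker_of, Subgroup.range_subtype,
        alternatingGroup.kleinFour_eq_commutator h]
  exact Group.isSolvable_of_ker_le_range (alternatingGroup α).subtype Equiv.Perm.sign <| by
    rw [Subgroup.range_subtype, alternatingGroup_eq_sign_ker]

lemma isSolvable_GL_two_of_card_eq_three {F : Type*} [Field F] (hF : Nat.card F = 3) :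
    Group.IsSolvable (GL (Fin 2) F) := by
  have : Finite F := Nat.finite_of_card_ne_zero (hF.symm ▸ three_ne_zero)
  have hperm := isSolvable_perm_of_card_eq_four <|
    (Projectivization.card_of_finrank_two F (Fin 2 → F) (Module.finrank_fin_fun F)).trans
      (congrArg (· + 1) hF)
  have hZ : Group.IsSolvable (Subgroup.center (Matrix.SpecialLinearGroup (Fin 2) F)) :=
    Group.isSolvable_of_comm fun a b => Subtype.ext (Subgroup.mem_center_iff.1 b.2 a.1)
  have hSL : Group.IsSolvable (Matrix.SpecialLinearGroup (Fin 2) F) :=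
    Group.isSolvable_of_ker_le_range
      (Subgroup.center (Matrix.SpecialLinearGroup (Fin 2) F)).subtype
      (MulAction.toPermHom _ (Projectivization F (Fin 2 → F))) <| by
        rw [Projectivization.SL_mulAction_ker, Subgroup.range_subtype]
  exact Group.isSolvable_of_ker_le_range Matrix.SpecialLinearGroup.toGL
    (Matrix.GeneralLinearGroup.det (n := Fin 2) (R := F)) fun g hg =>
      ⟨⟨g.1, congrArg Units.val hg⟩, Units.ext rfl⟩

end SolvableGL

section DiagonalSigns

variable {ι F : Type*} [Fintype ι] [DecidableEq ι] [Field F] {H : Subgroup (GL ι F)}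

variable (ι F) in
/-- The diagonal matrices with entries `±1`, as the image of a group of sign vectors. -/
def diagonalSigns : (ι → ℤˣ) →* GL ι F :=
  (Units.map (Matrix.diagonalRingHom ι F).toMonoidHom).comp <|
    MulEquiv.piUnits.symm.toMonoidHom.comp <|
      (Units.map (Int.castRingHom F).toMonoidHom).compLeft ι

lemma containsSigns_of_range_diagonalSigns_le (h : (diagonalSigns ι F).range ≤ H) :
    ContainsSigns H := fun i => by
  refine ⟨_, h ⟨Function.update 1 i (-1), rfl⟩, congrArg Matrix.diagonal (funext fun k => ?_)⟩
  obtain rfl | hk := eq_or_ne k i <;> simp [*]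

lemma exists_containsSigns_conjBy (hH : ¬ 2 ∣ H.index) : ∃ t, ContainsSigns (conjBy H t) :=
  have hsigns : IsPGroup 2 (ι → ℤˣ) := fun e => ⟨1, funext fun k => by simp⟩
  (exists_range_le_conjBy hsigns hH (diagonalSigns ι F)).imp fun _ =>
    containsSigns_of_range_diagonalSigns_le

variable [Finite H] [NeZero (Nat.card H : F)] [NeZero (2 : F)] [Group.IsSolvable H]

lemma ContainsSigns.blockMonomial (hH : ContainsSigns H) (h3 : ¬ 3 ∣ Nat.card H) {b : ι → ℕ}
    (hb : ∀ i k, b i = b k ↔ Linked H i k) {g : GL ι F} (hg : g ∈ H) :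
    BlockMonomial b g.1 where
  eq_iff_eq hi hi' := by rw [hb, hb, hH.linked_iff h3 hg hi hi']
  exists_apply_ne_zero j := by
    by_contra! h0
    have hone : (g⁻¹ * g).1 j j = 1 := by rw [inv_mul_cancel, Units.val_one, Matrix.one_apply_eq]
    rw [Units.val_mul, Matrix.mul_apply] at hone
    simp [h0] at hone

lemma ContainsSigns.hasCentralIntersection_of_not_linked (hH : ContainsSigns H)
    (h3 : ¬ 3 ∣ Nat.card H) {i k : ι} (hik : ¬ Linked H i k) :
    HasCentralIntersection (Matrix.GeneralLinearGroup.det (n := ι) (R := F)).ker H := by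
  obtain ⟨b, hb, hcard⟩ := exists_antitone_labelling
    (⟨Linked H, Linked.refl, Linked.symm, hH.linked_trans h3⟩ : Setoid ι)
  obtain ⟨pr, hpr⟩ := exists_isBlockChain hcard
  obtain ⟨f, hf⟩ : ∃ f, b f = 1 := by
    by_cases hi : b i = 0
    · exact hpr.exists_apply_eq_one fun hk => hik ((hb i k).1 (hi.trans hk.symm))
    · exact hpr.exists_apply_eq_one hi
  have hprf : b (pr f) = 0 := by
    have := hpr.apply_add_one (j := f) (by lia)
    lia
  obtain ⟨e, he, hef⟩ : ∃ e, b e = 0 ∧ ∀ j, b j = 0 → j = e ∨ j = pr f := by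
    by_cases h : ∃ e, b e = 0 ∧ e ≠ pr f
    · obtain ⟨e, he, hne⟩ := h
      refine ⟨e, he, fun j hj => ?_⟩
      by_contra! hj'
      exact hH.not_linked_of_ne h3 hne hj'.1.symm hj'.2.symm
        ((hb _ _).1 (he.trans hprf.symm)) ((hb _ _).1 (hprf.trans hj.symm))
    · push Not at h
      exact ⟨pr f, hprf, fun j hj => .inl (h j hj)⟩
  exact hpr.hasCentralIntersection (fun g => hH.blockMonomial h3 hb) he hf hef

lemma ContainsSigns.hasCentralIntersection {n : ℕ} {H : Subgroup (GL (Fin n) F)} [Finite H]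
    [NeZero (Nat.card H : F)] [Group.IsSolvable H] (hn : 2 ≤ n)
    (hF : n = 2 → Nat.card F ≠ 3) (hH : ContainsSigns H) (h3 : ¬ 3 ∣ Nat.card H) :
    HasCentralIntersection (Matrix.GeneralLinearGroup.det (n := Fin n) (R := F)).ker H := by
  by_cases hlinked : ∀ i k, Linked H i k
  · obtain rfl : n = 2 := by
      by_contra hne
      exact hH.not_linked_of_ne h3 (i := ⟨0, by lia⟩) (k := ⟨1, by lia⟩) (m := ⟨2, by lia⟩)
        (by simp) (by simp) (by simp) (hlinked _ _) (hlinked _ _)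
    exact hH.hasCentralIntersection_of_linked (hF rfl) h3 (hlinked 0 1)
  · push Not at hlinked
    obtain ⟨i, k, hik⟩ := hlinked
    exact hH.hasCentralIntersection_of_not_linked h3 hik

end DiagonalSigns

lemma det_ker_eq_SLsub (n : ℕ) (F : Type*) [Field F] :
    (Matrix.GeneralLinearGroup.det (n := Fin n) (R := F)).ker = SLsub n F :=
  Subgroup.ext fun _ => Units.ext_iff

lemma HasCentralIntersection.exists_eq_smul_one {n : ℕ} {F : Type*} [Field F]
    {S H : Subgroup (GL (Fin n) F)} (h : HasCentralIntersection S H) :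
    ∃ x y z : GL (Fin n) F,
      x ∈ (H : Set (GL (Fin n) F)) * S ∧ y ∈ (H : Set (GL (Fin n) F)) * S ∧
      z ∈ (H : Set (GL (Fin n) F)) * S ∧
      ∀ g ∈ H ⊓ conjBy H x ⊓ conjBy H y ⊓ conjBy H z, ∃ c : F, g.1 = c • 1 := by
  obtain ⟨x, hx, y, hy, z, hz, hc⟩ := h
  have hsub : (S : Set (GL (Fin n) F)) ⊆ H * S := Set.subset_mul_right _ H.one_mem
  refine ⟨x, y, z, hsub hx, hsub hy, hsub hz, fun g hg => ?_⟩
  obtain ⟨c, hgc⟩ := Matrix.GeneralLinearGroup.mem_center_iff_val_mem_range_scalar.1 (hc hg)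
  exact ⟨c, hgc.symm.trans (Matrix.smul_one_eq_diagonal c).symm⟩

lemma neZero_natCast_of_not_dvd {F : Type*} [Field F] [Fintype F] {p f m : ℕ} (hp : p.Prime)
    (hcard : Fintype.card F = p ^ f) (hm : ¬ p ∣ m) : NeZero (m : F) :=
  have : Fact p.Prime := ⟨hp⟩
  have : CharP F p := charP_of_card_eq_prime_pow hcard
  ⟨(CharP.cast_eq_zero_iff F p m).not.2 hm⟩

theorem stmt5_general {n : ℕ} {F : Type*} [Field F] [NeZero (2 : F)] {H : Subgroup (GL (Fin n) F)}
    [NeZero (Nat.card H : F)] [Group.IsSolvable H] (hn : 2 ≤ n)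
    (hGL : ¬ Group.IsSolvable (GL (Fin n) F)) (h2 : ¬ 2 ∣ H.index) (h3 : ¬ 3 ∣ Nat.card H) :
    HasCentralIntersection (SLsub n F) H := by
  obtain ⟨t, ht⟩ := exists_containsSigns_conjBy h2
  let e : H ≃* conjBy H t := H.equivMapOfInjective _ (MulAut.conj t⁻¹).injective
  have hcard : Nat.card (conjBy H t) = Nat.card H := (Nat.card_congr e.toEquiv).symm
  have : NeZero (Nat.card (conjBy H t) : F) := hcard ▸ inferInstance
  have : Finite (conjBy H t) :=
    Nat.finite_of_card_ne_zero fun h => NeZero.ne (Nat.card (conjBy H t) : F) (by simp [h])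
  have : Group.IsSolvable (conjBy H t) :=
    Group.isSolvable_of_surjective (f := e.toMonoidHom) e.surjective
  have hF : n = 2 → Nat.card F ≠ 3 := by
    rintro rfl hF
    exact hGL (isSolvable_GL_two_of_card_eq_three hF)
  rw [← det_ker_eq_SLsub]
  exact (ht.hasCentralIntersection hn hF (hcard ▸ h3)).of_conjBy

theorem stmt5 (p f q n : ℕ) (hp : p.Prime) (hf : 1 ≤ f) (hq : q = p ^ f)
    (F : Type) [Field F] [Fintype F] (hcard : Fintype.card F = q)
    (hn : 2 ≤ n) (hnonsolv : ¬ IsSolvable (GL (Fin n) F))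
    (π : Set ℕ) (hπ : ∀ r ∈ π, r.Prime) (h2pi : 2 ∈ π) (h3pi : 3 ∉ π) (hppi : p ∉ π)
    (H : Subgroup (GL (Fin n) F)) (hH : IsHallSubgroup π H)
    (hsolv : IsSolvable ↥H)
    :
    ∃ x y z : GL (Fin n) F,
      x ∈ (H : Set (GL (Fin n) F)) * (SLsub n F : Set (GL (Fin n) F)) ∧
      y ∈ (H : Set (GL (Fin n) F)) * (SLsub n F : Set (GL (Fin n) F)) ∧
      z ∈ (H : Set (GL (Fin n) F)) * (SLsub n F : Set (GL (Fin n) F)) ∧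
    ∀ g ∈ H ⊓ conjBy H x ⊓ conjBy H y ⊓ conjBy H z,
      ∃ c : F, (g : Matrix (Fin n) (Fin n) F) = c • (1 : Matrix (Fin n) (Fin n) F) := by
  have : NeZero (2 : F) := neZero_natCast_of_not_dvd hp (hcard.trans hq) <| by
    rw [Nat.prime_dvd_prime_iff_eq hp Nat.prime_two]
    exact fun h => hppi (h ▸ h2pi)
  have : NeZero (Nat.card H : F) := neZero_natCast_of_not_dvd hp (hcard.trans hq) fun h =>
    hppi (hH.1 p hp h)
  have : Group.IsSolvable H := hsolv
  exact (stmt5_general hn hnonsolv (hH.2 2 h2pi) fun h =>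
    h3pi (hH.1 3 Nat.prime_three h)).exists_eq_smul_one
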